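/- arXiv:2210.07868 — 3 statements merged into one kernel-verified Lean document; each statement's English description precedes it below -/
import Mathlib

section
/- (Almost dead ends in H_{2m+1}(ℤ) for cubical-like word metrics.) Let m ≥ 1 and let S₁,…,S_m be finite symmetric generating sets of H₃(ℤ), and let S be the corresponding cubical-like generating set of H_{2m+1}(ℤ). There exist constants C, M > 0 and D₀ such that for every D ≥ D₀ and every integer n ≥ C·D⁴, the element g = zⁿ = ((0,…,0), n) satisfies: for all h ∈ H_{2m+1}(ℤ) with ‖h‖_S ≤ D, one has ‖g·h‖_S ≤ ‖g‖_S + M. -/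
/-!
# Almost dead ends

The map `Phi : H₃(ℤ)^m → H_{2m+1}(ℤ)` that identifies the centres is a surjective homomorphism, and
a word of length `N` in the cubical-like generating set is the image of a family of words of the
same length `N`, one in each factor over `Sᵢ ∪ {1}` (`split_word`, `join_word`). A geodesic for `zⁿ`
thus gives closed words `wᵢ` of length `N` (closed meaning trivial in the abelianization), a
geodesic for `h` gives words `vᵢ` of length `d ≤ D`, and it suffices to spell every product
`wᵢ.prod * vᵢ.prod` with `N + O(1)` letters (`heisenberg_word`). By the quadratic isoperimetric
bound (`exists_c_le`), `n ≥ C * D ^ 4` forces `N ≥ D ^ 2 ≥ d ^ 2`.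

In one factor, a word projects to a lattice path in `ℤ²`, and its central coordinate is the signed
area of the path up to an error linear in its length. The heart of the proof is planar
(`exists_planar`): a closed path of length `N` can be replaced by a path of length `N + O(1)` that
ends near the prescribed point `v.sum`, and whose area is larger by any given multiple of `N`.

* To move the endpoint, delete about `T` letters forming zero-sum blocks of bounded size (Dickson's
  lemma), chosen so that the area drops at most by a factor `(1 - T / N) ^ 2` (`exists_remove`). Then
  insert a path of length `T` that is quasi-geodesic for the norm whose unit ball is the convex hull
  of the steps (`exists_geodesic`). A closed path of length `N` and area `a` has a chord whose width
  in the direction of the insertion is at least of order `a / N` (`exists_chord`), so inserting at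
  its end multiplies the area by about `1 + 2 * T / N`. The first-order terms cancel, and the
  remaining loss is `O(T ^ 2 + N) = O(N)` (`exists_shift`).
* To win back more than that loss, first make the path fat, of area at least `N ^ 2 / 32`
  (`exists_fat`); then inserting `2 * k` letters at a widest chord gains area of order `k * N`
  (`exists_gain`), and `k` is a constant.

Orienting the path one way or the other, the lifted word and its reverse have central coordinates on
either side of the desired one. Passing from one to the other by transpositions of adjacent letters
changes the central coordinate by `O(1)` at each step, so some rearrangement is correct up to `O(1)`
(`exists_perm_near`). The last discrepancy lies in a fixed finite set, hence costs `O(1)` letters.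
-/

/-- The discrete Heisenberg group `H₃(ℤ)`: `ℤ³` with group law
`(a,b,c)·(a',b',c') = (a+a', b+b', c+c'+ab')`. -/
@[ext] structure H3Z where
  a : ℤ
  b : ℤ
  c : ℤ

namespace H3Z

instance : Mul H3Z := ⟨fun g h => ⟨g.a + h.a, g.b + h.b, g.c + h.c + g.a * h.b⟩⟩
instance : One H3Z := ⟨⟨0, 0, 0⟩⟩
instance : Inv H3Z := ⟨fun g => ⟨-g.a, -g.b, g.a * g.b - g.c⟩⟩

@[simp] lemma mul_a (g h : H3Z) : (g * h).a = g.a + h.a := rfl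
@[simp] lemma mul_b (g h : H3Z) : (g * h).b = g.b + h.b := rfl
@[simp] lemma mul_c (g h : H3Z) : (g * h).c = g.c + h.c + g.a * h.b := rfl
@[simp] lemma one_a : (1 : H3Z).a = 0 := rfl
@[simp] lemma one_b : (1 : H3Z).b = 0 := rfl
@[simp] lemma one_c : (1 : H3Z).c = 0 := rfl
@[simp] lemma inv_a (g : H3Z) : g⁻¹.a = -g.a := rfl
@[simp] lemma inv_b (g : H3Z) : g⁻¹.b = -g.b := rfl
@[simp] lemma inv_c (g : H3Z) : g⁻¹.c = g.a * g.b - g.c := rfl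

instance : Group H3Z where
  mul_assoc g h k := by ext <;> simp <;> ring
  one_mul g := by ext <;> simp
  mul_one g := by ext <;> simp
  inv_mul_cancel g := by ext <;> simp [mul_comm]

end H3Z

/-- The higher discrete Heisenberg group `H_{2m+1}(ℤ)`: `(ℤ²)^m × ℤ` with group law
`((u₁,…,u_m),c)·((u₁',…,u_m'),c') = ((uᵢ+uᵢ')ᵢ, c+c'+Σᵢ aᵢbᵢ')` where `uᵢ = (aᵢ,bᵢ)`. -/
@[ext] structure H2m1Z (m : ℕ) where
  u : Fin m → ℤ × ℤ
  c : ℤ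

namespace H2m1Z

variable {m : ℕ}

instance : Mul (H2m1Z m) :=
  ⟨fun g h => ⟨fun i => g.u i + h.u i, g.c + h.c + ∑ i, (g.u i).1 * (h.u i).2⟩⟩
instance : One (H2m1Z m) := ⟨⟨fun _ => 0, 0⟩⟩
instance : Inv (H2m1Z m) :=
  ⟨fun g => ⟨fun i => -g.u i, (∑ i, (g.u i).1 * (g.u i).2) - g.c⟩⟩

@[simp] lemma mul_u (g h : H2m1Z m) : (g * h).u = fun i => g.u i + h.u i := rfl
@[simp] lemma mul_c (g h : H2m1Z m) :
    (g * h).c = g.c + h.c + ∑ i, (g.u i).1 * (h.u i).2 := rfl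
@[simp] lemma one_u : (1 : H2m1Z m).u = fun _ => 0 := rfl
@[simp] lemma one_c : (1 : H2m1Z m).c = 0 := rfl
@[simp] lemma inv_u (g : H2m1Z m) : g⁻¹.u = fun i => -g.u i := rfl
@[simp] lemma inv_c (g : H2m1Z m) :
    g⁻¹.c = (∑ i, (g.u i).1 * (g.u i).2) - g.c := rfl

instance : Group (H2m1Z m) where
  mul_assoc g h k := by
    ext i <;> simp [Prod.ext_iff, add_mul, mul_add, Finset.sum_add_distrib] <;> ring
  one_mul g := by ext <;> simp
  mul_one g := by ext <;> simp
  inv_mul_cancel g := by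
    ext <;> simp [mul_comm]

end H2m1Z

/-- The embedding `ιᵢ : H₃(ℤ) → H_{2m+1}(ℤ)` placing `(a,b)` in the `i`-th pair of
coordinates and `c` in the central coordinate. -/
def iota {m : ℕ} (i : Fin m) (g : H3Z) : H2m1Z m :=
  ⟨fun j => if j = i then (g.a, g.b) else 0, g.c⟩

/-- The cubical-like generating set of `H_{2m+1}(ℤ)` associated to generating sets
`S₁,…,S_m` of `H₃(ℤ)`: all products `ι₁(s₁)·…·ι_m(s_m)` with `sᵢ ∈ Sᵢ ∪ {1}`. -/
def cubeGenSet {m : ℕ} (S : Fin m → Set H3Z) : Set (H2m1Z m) :=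
  { g | ∃ s : Fin m → H3Z, (∀ i, s i ∈ S i ∪ {1}) ∧
      g = (List.ofFn (fun i => iota i (s i))).prod }

/-- The word length of `g` with respect to a generating set `S`: the least `n` such that
`g` is a product of `n` elements of `S`. -/
noncomputable def wordLength {G : Type*} [Monoid G] (S : Set G) (g : G) : ℕ :=
  sInf { n | ∃ l : List G, l.length = n ∧ (∀ x ∈ l, x ∈ S) ∧ l.prod = g }

namespace DeadEnds

/-! ### Signed area of lattice paths -/

/-- The symplectic (cross) product on `ℤ²`. -/
def cr (p q : ℤ × ℤ) : ℤ := p.1 * q.2 - p.2 * q.1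

lemma cr_add_left (p q r : ℤ × ℤ) : cr (p + q) r = cr p r + cr q r := by
  simp [cr]; ring
lemma cr_add_right (p q r : ℤ × ℤ) : cr p (q + r) = cr p q + cr p r := by
  simp [cr]; ring
lemma cr_neg_left (p q : ℤ × ℤ) : cr (-p) q = -cr p q := by
  simp [cr]; ring
lemma cr_neg_right (p q : ℤ × ℤ) : cr p (-q) = -cr p q := by
  simp [cr]; ring
lemma cr_swap (p q : ℤ × ℤ) : cr p q = -cr q p := by
  simp [cr]; ring
@[simp] lemma cr_self (p : ℤ × ℤ) : cr p p = 0 := by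
  simp [cr]; ring
@[simp] lemma cr_zero_left (p : ℤ × ℤ) : cr 0 p = 0 := by simp [cr]
@[simp] lemma cr_zero_right (p : ℤ × ℤ) : cr p 0 = 0 := by simp [cr]

/-- Twice the signed area swept by the lattice path with step list `l`, the path being closed up
by the chord from its endpoint to its origin. -/
def Ar : List (ℤ × ℤ) → ℤ
  | [] => 0
  | x :: l => Ar l + cr x l.sum

@[simp] lemma Ar_nil : Ar [] = 0 := rfl
@[simp] lemma Ar_cons (x : ℤ × ℤ) (l) : Ar (x :: l) = Ar l + cr x l.sum := rfl

lemma Ar_append (l l' : List (ℤ × ℤ)) :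
    Ar (l ++ l') = Ar l + Ar l' + cr l.sum l'.sum := by
  induction l with
  | nil => simp
  | cons x l ih => simp [ih, cr_add_left, cr_add_right]; ring

lemma Ar_reverse (l : List (ℤ × ℤ)) : Ar l.reverse = -Ar l := by
  induction l with
  | nil => simp
  | cons x l ih => simp [Ar_append, ih, List.sum_reverse]; rw [cr_swap]; ring

lemma Ar_replicate (k : ℕ) (x : ℤ × ℤ) : Ar (List.replicate k x) = 0 := by
  induction k with
  | zero => simp
  | succ k ih => simp [List.replicate_succ, ih, cr]; ring

/-- The step set `V` lies in the square of radius `ρ`. -/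
def Bdd (V : Finset (ℤ × ℤ)) (ρ : ℤ) : Prop := ∀ p ∈ V, |p.1| ≤ ρ ∧ |p.2| ≤ ρ

lemma Bdd.sum {V : Finset (ℤ × ℤ)} {ρ : ℤ} (hV : Bdd V ρ) (l : List (ℤ × ℤ))
    (hl : ∀ x ∈ l, x ∈ V) : |l.sum.1| ≤ ρ * l.length ∧ |l.sum.2| ≤ ρ * l.length := by
  induction l with
  | nil => simp
  | cons x l ih =>
    have h1 := hV x (hl x (by simp))
    have h2 := ih (fun y hy => hl y (by simp [hy]))
    simp only [List.sum_cons, Prod.fst_add, Prod.snd_add, List.length_cons]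
    push_cast
    constructor
    · calc _ ≤ |x.1| + |l.sum.1| := abs_add_le _ _
        _ ≤ _ := by linarith
    · calc _ ≤ |x.2| + |l.sum.2| := abs_add_le _ _
        _ ≤ _ := by linarith

lemma abs_cr_le {p q : ℤ × ℤ} {r s : ℤ} (h1 : |p.1| ≤ r ∧ |p.2| ≤ r)
    (h2 : |q.1| ≤ s ∧ |q.2| ≤ s) : |cr p q| ≤ 2 * (r * s) := by
  have hr : 0 ≤ r := (abs_nonneg _).trans h1.1
  have a1 : |p.1 * q.2| ≤ r * s := by
    rw [abs_mul]; exact mul_le_mul h1.1 h2.2 (abs_nonneg _) hr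
  have a2 : |p.2 * q.1| ≤ r * s := by
    rw [abs_mul]; exact mul_le_mul h1.2 h2.1 (abs_nonneg _) hr
  calc _ ≤ |p.1 * q.2| + |p.2 * q.1| := abs_sub _ _
    _ ≤ _ := by linarith

lemma Bdd.Ar {V : Finset (ℤ × ℤ)} {ρ : ℤ} (hV : Bdd V ρ) (l : List (ℤ × ℤ))
    (hl : ∀ x ∈ l, x ∈ V) : |Ar l| ≤ 2 * ρ ^ 2 * (l.length : ℤ) ^ 2 := by
  induction l with
  | nil => simp
  | cons x l ih =>
    have h1 := hV x (hl x (by simp))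
    have hl' : ∀ y ∈ l, y ∈ V := fun y hy => hl y (by simp [hy])
    have h2 := ih hl'
    have h3 := abs_cr_le h1 (hV.sum l hl')
    have : |DeadEnds.Ar l + cr x l.sum| ≤ |DeadEnds.Ar l| + |cr x l.sum| := abs_add_le _ _
    simp only [Ar_cons, List.length_cons]
    push_cast
    nlinarith [mul_nonneg (sq_nonneg ρ) (Int.natCast_nonneg l.length), sq_nonneg ρ]

/-- The linear functional on `ℤ²` with real coefficients `A`. -/
def al (A : ℝ × ℝ) (p : ℤ × ℤ) : ℝ := A.1 * p.1 + A.2 * p.2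

lemma al_add (A : ℝ × ℝ) (p q : ℤ × ℤ) : al A (p + q) = al A p + al A q := by
  simp [al]; ring
@[simp] lemma al_zero (A : ℝ × ℝ) : al A 0 = 0 := by simp [al]

lemma al_sum_le (A : ℝ × ℝ) (l : List (ℤ × ℤ)) (hl : ∀ x ∈ l, |al A x| ≤ 1) :
    al A l.sum ≤ l.length := by
  induction l with
  | nil => simp
  | cons x l ih =>
    have h1 := (abs_le.1 (hl x (by simp))).2
    have h2 := ih (fun y hy => hl y (by simp [hy]))
    simp only [List.sum_cons, al_add, List.length_cons]
    push_cast
    linarith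

/-- If the height `cr · u` stays within `W / 2` of `c₀` along the path started at `p`, the area is
controlled by the variation of `A` times `W`. It is a discrete form of
`area = ∮ height d(horizontal)`, resting on the Plücker relation between `cr` and `al A`. -/
lemma area_le_aux (A : ℝ × ℝ) (u : ℤ × ℤ) (c₀ W : ℝ) (l : List (ℤ × ℤ))
    (hl : ∀ x ∈ l, |al A x| ≤ 1) (p : ℤ × ℤ)
    (hW : ∀ a, a <+: l → 2 * |(cr (p + a.sum) u : ℝ) - c₀| ≤ W) :
    al A u * (Ar l + cr p l.sum) + al A (p + l.sum) * cr (p + l.sum) u - al A p * cr p u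
      - 2 * c₀ * al A l.sum ≤ W * l.length := by
  induction l generalizing p with
  | nil => simp
  | cons x l ih =>
    have h1 := hl x (by simp)
    have h2 := ih (fun y hy => hl y (by simp [hy])) (p + x) (by
      intro a ha
      have := hW (x :: a) (by simpa using ha)
      simpa [add_assoc] using this)
    have h3 := hW [] (by simp)
    have h4 := hW [x] (by simp)
    simp only [List.sum_nil, add_zero, List.sum_cons] at h3 h4
    have h5 : al A x * ((cr p u : ℝ) - c₀ + ((cr (p + x) u : ℝ) - c₀)) ≤ W := by
      calc _ ≤ |al A x * ((cr p u : ℝ) - c₀ + ((cr (p + x) u : ℝ) - c₀))| := le_abs_self _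
        _ = |al A x| * |((cr p u : ℝ) - c₀ + ((cr (p + x) u : ℝ) - c₀))| := abs_mul _ _
        _ ≤ 1 * |((cr p u : ℝ) - c₀ + ((cr (p + x) u : ℝ) - c₀))| := by gcongr
        _ ≤ 1 * (|(cr p u : ℝ) - c₀| + |(cr (p + x) u : ℝ) - c₀|) := by
            gcongr; exact abs_add_le _ _
        _ ≤ W := by linarith
    simp only [List.sum_cons, List.length_cons, Ar_cons]
    rw [← add_assoc p x]
    refine le_trans (le_of_eq ?_) ((add_le_add h2 h5).trans (by push_cast; linarith))
    simp [al, cr]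
    ring

/-- Chord lemma: a closed path has a cyclic rotation `q₁ ++ q₂` whose chord
`q₁.sum` is at least as wide, seen along `u`, as the area of the path dictates. -/
lemma exists_chord (A : ℝ × ℝ) (u : ℤ × ℤ) (w : List (ℤ × ℤ))
    (hw : ∀ x ∈ w, |al A x| ≤ 1) (h0 : w.sum = 0) :
    ∃ q₁ q₂ : List (ℤ × ℤ), (q₁ ++ q₂).Perm w ∧ Ar (q₁ ++ q₂) = Ar w ∧
      al A u * Ar w ≤ cr q₁.sum u * w.length := by
  classical
  -- `P` and `p` are the prefixes at which the height `cr · u` is maximal and minimal.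
  obtain ⟨P, hP, hPm⟩ := Finset.exists_max_image w.inits.toFinset
    (fun a => cr a.sum u) ⟨[], by simp⟩
  obtain ⟨p, hp, hpm⟩ := Finset.exists_min_image w.inits.toFinset
    (fun a => cr a.sum u) ⟨[], by simp⟩
  simp only [List.mem_toFinset, List.mem_inits] at hP hPm hp hpm
  have key : al A u * Ar w ≤ ((cr P.sum u : ℝ) - cr p.sum u) * w.length := by
    have := area_le_aux A u (((cr P.sum u : ℝ) + cr p.sum u) / 2)
      ((cr P.sum u : ℝ) - cr p.sum u) w hw 0 (by
        intro a ha
        have h1 : (cr a.sum u : ℝ) ≤ cr P.sum u := by exact_mod_cast hPm a ha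
        have h2 : (cr p.sum u : ℝ) ≤ cr a.sum u := by exact_mod_cast hpm a ha
        rw [zero_add, ← abs_two, ← abs_mul, abs_le]
        constructor <;> norm_num <;> linarith)
    simpa [h0] using this
  rcases List.prefix_or_prefix_of_prefix hP hp with h | h
  · obtain ⟨b, rfl⟩ := h
    obtain ⟨c, rfl⟩ := hp
    have e1 : c.sum = -(P.sum + b.sum) := by
      simp only [List.sum_append] at h0
      exact (neg_eq_of_add_eq_zero_right h0).symm
    refine ⟨c ++ P, b, ?_, ?_, ?_⟩
    · rw [List.append_assoc]; exact List.perm_append_comm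
    · simp only [Ar_append, List.sum_append, e1, cr_add_left, cr_add_right, cr_neg_left,
        cr_neg_right, cr_self]
      rw [cr_swap b.sum P.sum]; ring
    · refine key.trans (le_of_eq ?_)
      simp only [List.sum_append, e1, cr_add_left, cr_neg_left]
      push_cast; ring
  · obtain ⟨b, rfl⟩ := h
    obtain ⟨c, rfl⟩ := hP
    have e1 : c.sum = -(p.sum + b.sum) := by
      simp only [List.sum_append] at h0
      exact (neg_eq_of_add_eq_zero_right h0).symm
    refine ⟨b, c ++ p, ?_, ?_, ?_⟩
    · rw [← List.append_assoc]
      refine List.perm_append_comm.trans ?_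
      rw [List.append_assoc]
    · simp only [Ar_append, List.sum_append, e1, cr_add_left, cr_add_right, cr_neg_left,
        cr_neg_right, cr_self]
      rw [cr_swap b.sum p.sum]; ring
    · refine key.trans (le_of_eq ?_)
      simp only [List.sum_append, cr_add_left]
      push_cast; ring

/-- Inserting the path `v` into a rotation of the closed path `w`, at the far end of a widest
chord, moves the endpoint to `v.sum` and gains area proportional to `al A v.sum`. -/
lemma exists_insert {V : Finset (ℤ × ℤ)} (A : ℝ × ℝ) (hA : ∀ x ∈ V, |al A x| ≤ 1)
    (w v : List (ℤ × ℤ)) (hw : ∀ x ∈ w, x ∈ V) (hv : ∀ x ∈ v, x ∈ V) (h0 : w.sum = 0) :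
    ∃ w' : List (ℤ × ℤ), (∀ x ∈ w', x ∈ V) ∧ w'.length = w.length + v.length ∧
      w'.sum = v.sum ∧
      2 * (al A v.sum * Ar w) ≤ ((Ar w' : ℝ) - Ar w - Ar v) * w.length := by
  obtain ⟨q₁, q₂, hq, hAr, h⟩ := exists_chord A v.sum w (fun x hx => hA x (hw x hx)) h0
  have e0 := hq.sum_eq
  have e2 : q₂.sum = -q₁.sum := by
    rw [h0, List.sum_append] at e0
    exact (neg_eq_of_add_eq_zero_right e0).symm
  refine ⟨q₁ ++ v ++ q₂, ?_, ?_, ?_, ?_⟩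
  · intro x hx
    have : x ∈ v ∨ x ∈ q₁ ++ q₂ := by
      simp only [List.mem_append] at hx ⊢; tauto
    rcases this with h | h
    · exact hv x h
    · exact hw x (hq.subset h)
  · have := hq.length_eq
    simp only [List.length_append] at this ⊢
    omega
  · simp [e2]
  · have : Ar (q₁ ++ v ++ q₂) = Ar w + Ar v + 2 * cr q₁.sum v.sum := by
      rw [← hAr]
      simp only [Ar_append, List.sum_append, e2, cr_add_left, cr_neg_right, cr_self]
      rw [cr_swap v.sum]; ring
    rw [this]
    push_cast
    linarith

/-! ### Quasi-geodesics in the plane -/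

lemma exists_list_of_mult (V : Finset (ℤ × ℤ)) (n : ℤ × ℤ → ℕ) :
    ∃ l : List (ℤ × ℤ), (∀ x ∈ l, x ∈ V) ∧ l.length = ∑ s ∈ V, n s ∧
      l.sum = ∑ s ∈ V, n s • s := by
  classical
  induction V using Finset.induction_on with
  | empty => exact ⟨[], by simp⟩
  | insert a V ha ih =>
    obtain ⟨l, h1, h2, h3⟩ := ih
    refine ⟨List.replicate (n a) a ++ l, ?_, ?_, ?_⟩
    · intro x hx
      rcases List.mem_append.1 hx with h | h
      · simp [List.eq_of_mem_replicate h]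
      · simp [h1 x h]
    · simp [Finset.sum_insert ha, h2]
    · simp [Finset.sum_insert ha, h3]

/-- The inclusion `ℤ² ⊂ ℝ²`. -/
def emb (p : ℤ × ℤ) : ℝ × ℝ := ((p.1 : ℝ), (p.2 : ℝ))

lemma emb_injective : Function.Injective emb := by
  intro p q h
  simp only [emb, Prod.mk.injEq, Int.cast_inj] at h
  exact Prod.ext h.1 h.2

lemma emb_sum_mem (V : Finset (ℤ × ℤ)) (hV0 : (0 : ℤ × ℤ) ∈ V) (v : List (ℤ × ℤ))
    (hv : ∀ x ∈ v, x ∈ V) :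
    ∃ y ∈ convexHull ℝ (emb '' V), emb v.sum = (v.length : ℝ) • y := by
  induction v with
  | nil => exact ⟨emb 0, subset_convexHull _ _ ⟨0, hV0, rfl⟩, by simp [emb]⟩
  | cons x v ih =>
    obtain ⟨y, hy, h⟩ := ih (fun z hz => hv z (by simp [hz]))
    have hx : emb x ∈ convexHull ℝ (emb '' V) :=
      subset_convexHull _ _ ⟨x, hv x (by simp), rfl⟩
    have hp : (0 : ℝ) < v.length + 1 := by positivity
    refine ⟨((v.length : ℝ) / (v.length + 1)) • y + ((1 : ℝ) / (v.length + 1)) • emb x,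
      convex_convexHull _ _ hy hx (by positivity) (by positivity) (by field_simp), ?_⟩
    have : emb (x :: v).sum = emb v.sum + emb x := by
      simp [emb]; constructor <;> ring
    rw [this, h, smul_add, smul_smul, smul_smul, List.length_cons]
    push_cast
    congr 1
    · congr 1; field_simp
    · rw [show ((v.length : ℝ) + 1) * (1 / (v.length + 1)) = 1 by field_simp, one_smul]

/-- A point of the `r`-th dilate of the hull of `V`, outside the `(r-1)`-st, has a functional
bounded by `1` on `V` and at least `r - 1` on the point. -/
lemma exists_functional (V : Finset (ℤ × ℤ)) (hV0 : (0 : ℤ × ℤ) ∈ V)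
    (hVs : ∀ x ∈ V, -x ∈ V) (u : ℤ × ℤ) (r : ℕ)
    (hr : ∀ k < r, ¬ ∃ y ∈ convexHull ℝ (emb '' V), emb u = (k : ℝ) • y) :
    ∃ A : ℝ × ℝ, (∀ x ∈ V, |al A x| ≤ 1) ∧ (r : ℝ) ≤ al A u + 1 := by
  by_cases hr1 : r ≤ 1
  · refine ⟨0, by simp [al], ?_⟩
    have : (r : ℝ) ≤ 1 := by exact_mod_cast hr1
    simpa [al] using this
  push Not at hr1
  have hk : (0 : ℝ) < ((r - 1 : ℕ) : ℝ) := by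
    exact_mod_cast (by omega : 0 < r - 1)
  have hnot : (((r - 1 : ℕ) : ℝ)⁻¹ • emb u) ∉ convexHull ℝ (emb '' V) := by
    intro h
    refine hr (r - 1) (by omega) ⟨_, h, ?_⟩
    rw [smul_smul, mul_inv_cancel₀ hk.ne', one_smul]
  obtain ⟨f, s, hf, hs⟩ := geometric_hahn_banach_closed_point (convex_convexHull ℝ (emb '' V))
    ((V.finite_toSet.image emb).isCompact_convexHull (𝕜 := ℝ)).isClosed hnot
  have hfe : ∀ p : ℤ × ℤ, f (emb p) = al (f (1, 0), f (0, 1)) p := by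
    intro p
    have : emb p = (p.1 : ℝ) • ((1, 0) : ℝ × ℝ) + (p.2 : ℝ) • ((0, 1) : ℝ × ℝ) := by
      simp [emb]
    rw [this, map_add, map_smul, map_smul]
    simp [al, mul_comm]
  have hs0 : 0 < s := by
    have := hf (emb 0) (subset_convexHull _ _ ⟨0, hV0, rfl⟩)
    rwa [hfe, al_zero] at this
  have hal : ∀ p : ℤ × ℤ, al (f (1, 0) / s, f (0, 1) / s) p = f (emb p) / s := by
    intro p; rw [hfe]; simp only [al]; ring
  have hle : ∀ x ∈ V, al (f (1, 0) / s, f (0, 1) / s) x ≤ 1 := by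
    intro x hx
    rw [hal, div_le_one hs0]
    exact (hf _ (subset_convexHull _ _ ⟨x, hx, rfl⟩)).le
  refine ⟨(f (1, 0) / s, f (0, 1) / s), ?_, ?_⟩
  · intro x hx
    rw [abs_le]
    refine ⟨?_, hle x hx⟩
    have h1 := hle _ (hVs x hx)
    have h2 := al_add (f (1, 0) / s, f (0, 1) / s) x (-x)
    rw [add_neg_cancel, al_zero] at h2
    linarith
  · rw [hal]
    rw [map_smul, smul_eq_mul, lt_inv_mul_iff₀ hk] at hs
    have : ((r - 1 : ℕ) : ℝ) ≤ f (emb u) / s := by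
      rw [le_div_iff₀ hs0]; exact hs.le
    rw [Nat.cast_sub (by omega)] at this
    push_cast at this
    linarith

/-- Every lattice path `v` can be replaced by a path `v'` with nearly the same endpoint that is
geodesic up to a bounded error, as certified by a functional `A` (the dual norm). -/
lemma exists_geodesic (V : Finset (ℤ × ℤ)) (hV0 : (0 : ℤ × ℤ) ∈ V)
    (hVs : ∀ x ∈ V, -x ∈ V) {ρ : ℤ} (hρ : Bdd V ρ) (v : List (ℤ × ℤ))
    (hv : ∀ x ∈ v, x ∈ V) :
    ∃ (A : ℝ × ℝ) (v' : List (ℤ × ℤ)), (∀ x ∈ V, |al A x| ≤ 1) ∧ (∀ x ∈ v', x ∈ V) ∧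
      v'.length ≤ v.length ∧ (v'.length : ℝ) ≤ al A v'.sum + (V.card + 1) ∧
      |v'.sum.1 - v.sum.1| ≤ ρ * V.card ∧ |v'.sum.2 - v.sum.2| ≤ ρ * V.card := by
  classical
  have hex := emb_sum_mem V hV0 v hv
  have hex' : ∃ r : ℕ, ∃ y ∈ convexHull ℝ (emb '' V), emb v.sum = (r : ℝ) • y := ⟨_, hex⟩
  -- `r` is the gauge of `v.sum` rounded up; the coefficients of a convex combination representing
  -- `v.sum` in the `r`-th dilate are rounded down to multiplicities.
  obtain ⟨r, hrdef⟩ : ∃ r, r = Nat.find hex' := ⟨_, rfl⟩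
  have hrv : r ≤ v.length := hrdef ▸ Nat.find_min' hex' hex
  obtain ⟨A, hA, hAr⟩ := exists_functional V hV0 hVs v.sum r
    (fun k hk => Nat.find_min hex' (hrdef ▸ hk))
  obtain ⟨y, hy, huy⟩ : ∃ y ∈ convexHull ℝ (emb '' V), emb v.sum = (r : ℝ) • y :=
    hrdef ▸ Nat.find_spec hex'
  rw [← Finset.coe_image, Finset.mem_convexHull'] at hy
  obtain ⟨c, hc0, hc1, hcy⟩ := hy
  rw [Finset.sum_image (fun a _ b _ h => emb_injective h)] at hc1 hcy
  have hx0 : ∀ s ∈ V, 0 ≤ (r : ℝ) * c (emb s) := fun s hs =>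
    mul_nonneg (Nat.cast_nonneg _) (hc0 _ (Finset.mem_image_of_mem _ hs))
  obtain ⟨l, hl1, hl2, hl3⟩ := exists_list_of_mult V (fun s => ⌊(r : ℝ) * c (emb s)⌋₊)
  have hfl : ∀ s ∈ V, 0 ≤ (r : ℝ) * c (emb s) - ⌊(r : ℝ) * c (emb s)⌋₊ ∧
      (r : ℝ) * c (emb s) - ⌊(r : ℝ) * c (emb s)⌋₊ ≤ 1 := by
    intro s hs
    have h1 := Nat.floor_le (hx0 s hs)
    have h2 := Nat.lt_floor_add_one ((r : ℝ) * c (emb s))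
    constructor <;> linarith
  have hlr : l.length ≤ r := by
    have : (l.length : ℝ) ≤ r := by
      rw [hl2]; push_cast
      calc _ ≤ ∑ s ∈ V, (r : ℝ) * c (emb s) :=
            Finset.sum_le_sum (fun s hs => Nat.floor_le (hx0 s hs))
        _ = r := by rw [← Finset.mul_sum, hc1, mul_one]
    exact_mod_cast this
  have hu1 : (v.sum.1 : ℝ) = ∑ s ∈ V, (r : ℝ) * c (emb s) * s.1 := by
    have := congrArg Prod.fst huy
    rw [← hcy, Prod.smul_fst, Prod.fst_sum, smul_eq_mul, Finset.mul_sum] at this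
    simpa [emb, mul_assoc] using this
  have hu2 : (v.sum.2 : ℝ) = ∑ s ∈ V, (r : ℝ) * c (emb s) * s.2 := by
    have := congrArg Prod.snd huy
    rw [← hcy, Prod.smul_snd, Prod.snd_sum, smul_eq_mul, Finset.mul_sum] at this
    simpa [emb, mul_assoc] using this
  have hv1 : (l.sum.1 : ℝ) = ∑ s ∈ V, (⌊(r : ℝ) * c (emb s)⌋₊ : ℝ) * s.1 := by
    rw [hl3, Prod.fst_sum]; push_cast; simp
  have hv2 : (l.sum.2 : ℝ) = ∑ s ∈ V, (⌊(r : ℝ) * c (emb s)⌋₊ : ℝ) * s.2 := by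
    rw [hl3, Prod.snd_sum]; push_cast; simp
  refine ⟨A, l, hA, hl1, hlr.trans hrv, ?_, ?_, ?_⟩
  · have e1 : al A v.sum - al A l.sum
        = ∑ s ∈ V, ((r : ℝ) * c (emb s) - ⌊(r : ℝ) * c (emb s)⌋₊) * al A s := by
      simp only [al, hu1, hu2, hv1, hv2, sub_mul, Finset.sum_sub_distrib, mul_add,
        Finset.mul_sum, Finset.sum_add_distrib]
      simp only [mul_left_comm]
      ring
    have e2 : al A v.sum - al A l.sum ≤ V.card := by
      rw [e1]
      calc _ ≤ ∑ s ∈ V, (1 : ℝ) := by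
            refine Finset.sum_le_sum (fun s hs => ?_)
            have h1 := hfl s hs
            have h2 := (abs_le.1 (hA s hs)).2
            nlinarith
        _ = V.card := by simp
    have : (l.length : ℝ) ≤ r := by exact_mod_cast hlr
    linarith
  · have : |(l.sum.1 : ℝ) - v.sum.1| ≤ ρ * V.card := by
      rw [hu1, hv1, abs_sub_comm, ← Finset.sum_sub_distrib]
      refine (Finset.abs_sum_le_sum_abs _ _).trans ?_
      calc _ ≤ ∑ s ∈ V, (ρ : ℝ) := by
            refine Finset.sum_le_sum (fun s hs => ?_)
            have h1 := hfl s hs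
            have h2 : |(s.1 : ℝ)| ≤ ρ := by exact_mod_cast (hρ s hs).1
            rw [← sub_mul, abs_mul, abs_of_nonneg h1.1]
            nlinarith [abs_nonneg (s.1 : ℝ)]
        _ = _ := by simp [mul_comm]
    exact_mod_cast this
  · have : |(l.sum.2 : ℝ) - v.sum.2| ≤ ρ * V.card := by
      rw [hu2, hv2, abs_sub_comm, ← Finset.sum_sub_distrib]
      refine (Finset.abs_sum_le_sum_abs _ _).trans ?_
      calc _ ≤ ∑ s ∈ V, (ρ : ℝ) := by
            refine Finset.sum_le_sum (fun s hs => ?_)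
            have h1 := hfl s hs
            have h2 : |(s.2 : ℝ)| ≤ ρ := by exact_mod_cast (hρ s hs).2
            rw [← sub_mul, abs_mul, abs_of_nonneg h1.1]
            nlinarith [abs_nonneg (s.2 : ℝ)]
        _ = _ := by simp [mul_comm]
    exact_mod_cast this

/-! ### Deleting zero-sum blocks -/

section

open Finset

/-- Dickson's lemma in the form: zero-sum families of vectors of `V` contain zero-sum
subfamilies of bounded size. -/
lemma exists_block (V : Finset (ℤ × ℤ)) :
    ∃ B : ℕ, ∀ (s : ℕ → ℤ × ℤ) (J : Finset ℕ), (∀ j ∈ J, s j ∈ V) → J.Nonempty →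
      ∑ j ∈ J, s j = 0 → ∃ I ⊆ J, I.Nonempty ∧ I.card ≤ B ∧ ∑ j ∈ I, s j = 0 := by
  classical
  set P : (V → ℕ) → Prop := fun m => m ≠ 0 ∧ ∑ v : V, m v • (v : ℤ × ℤ) = 0 with hP
  have hfin : {m | Minimal P m}.Finite :=
    WellQuasiOrderedLE.finite_of_isAntichain (setOfPred_minimal_antichain P)
  obtain ⟨B, hB⟩ := (hfin.image (fun m => ∑ v, m v)).bddAbove
  refine ⟨B, fun s J hJ hne h0 => ?_⟩
  have hcount : P (fun v => #{j ∈ J | s j = v}) := by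
    constructor
    · obtain ⟨j, hj⟩ := hne
      intro h
      have := congrFun h ⟨s j, hJ j hj⟩
      simp only [Pi.zero_apply, card_eq_zero] at this
      exact (Finset.filter_eq_empty_iff.1 this) hj rfl
    · rw [← h0, ← Finset.sum_fiberwise_of_maps_to (g := s) (t := V) hJ]
      rw [← Finset.sum_coe_sort V]
      refine Finset.sum_congr rfl (fun v _ => ?_)
      rw [Finset.sum_congr rfl (fun j hj => (Finset.mem_filter.1 hj).2), sum_const]
  obtain ⟨m, hmle, hm⟩ := exists_minimal_le_of_wellFoundedLT P _ hcount
  have hch : ∀ v : V, ∃ t ⊆ ({j ∈ J | s j = v} : Finset ℕ), #t = m v :=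
    fun v => Finset.exists_subset_card_eq (hmle v)
  choose t ht htc using hch
  have hdis : ((univ : Finset V) : Set V).PairwiseDisjoint t := by
    intro v _ w _ hvw
    refine Finset.disjoint_left.2 (fun j hj hj' => hvw ?_)
    have h1 := (Finset.mem_filter.1 (ht v hj)).2
    have h2 := (Finset.mem_filter.1 (ht w hj')).2
    exact Subtype.ext (h1.symm.trans h2)
  have hcard : #(univ.biUnion t) = ∑ v, m v := by
    rw [Finset.card_biUnion (fun v hv w hw h => hdis hv hw h)]
    exact Finset.sum_congr rfl (fun v _ => htc v)
  refine ⟨univ.biUnion t, ?_, ?_, ?_, ?_⟩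
  · exact Finset.biUnion_subset.2 (fun v _ => (ht v).trans (Finset.filter_subset _ _))
  · rw [← Finset.card_pos, hcard]
    refine Nat.pos_of_ne_zero (fun h => hm.1.1 ?_)
    funext v
    exact (Finset.sum_eq_zero_iff.1 h) v (mem_univ _)
  · rw [hcard]
    exact hB ⟨m, hm, rfl⟩
  · rw [Finset.sum_biUnion hdis, ← hm.1.2]
    refine Finset.sum_congr rfl (fun v _ => ?_)
    rw [Finset.sum_congr rfl (fun j hj => (Finset.mem_filter.1 (ht v hj)).2), sum_const, htc]

/-- Splitting off bounded zero-sum blocks one by one, one of them has weight at most the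
average. -/
lemma exists_block_le {V : Finset (ℤ × ℤ)} {B : ℕ} {s : ℕ → ℤ × ℤ}
    (hB : ∀ (J : Finset ℕ), (∀ j ∈ J, s j ∈ V) → J.Nonempty →
      ∑ j ∈ J, s j = 0 → ∃ I ⊆ J, I.Nonempty ∧ I.card ≤ B ∧ ∑ j ∈ I, s j = 0)
    (f : ℕ → ℝ) (J : Finset ℕ) (hJ : ∀ j ∈ J, s j ∈ V) (hne : J.Nonempty)
    (h0 : ∑ j ∈ J, s j = 0) (hf : ∑ j ∈ J, f j ≤ 0) :
    ∃ I ⊆ J, I.Nonempty ∧ I.card ≤ B ∧ ∑ j ∈ I, s j = 0 ∧ ∑ j ∈ I, f j ≤ 0 := by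
  induction J using Finset.strongInduction with
  | H J ih =>
    obtain ⟨I, hIJ, hI, hIB, hI0⟩ := hB J hJ hne h0
    by_cases hfI : ∑ j ∈ I, f j ≤ 0
    · exact ⟨I, hIJ, hI, hIB, hI0, hfI⟩
    push Not at hfI
    have h1 := Finset.sum_sdiff (f := f) hIJ
    have h2 := Finset.sum_sdiff (f := s) hIJ
    have hne' : (J \ I).Nonempty := by
      rw [Finset.nonempty_iff_ne_empty]
      intro h
      rw [h, Finset.sum_empty] at h1
      linarith
    obtain ⟨I', hI'J, r⟩ := ih (J \ I) (Finset.sdiff_ssubset hIJ hI)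
      (fun j hj => hJ j (Finset.sdiff_subset hj)) hne' (by rw [← h0, ← h2, hI0, add_zero])
      (by linarith)
    exact ⟨I', hI'J.trans Finset.sdiff_subset, r⟩

/-- The symmetric kernel with `∑_{i,j ∈ J} ker s i j` equal to twice `Ar` of the subpath of `s`
indexed by `J`. -/
def ker (s : ℕ → ℤ × ℤ) (i j : ℕ) : ℤ :=
  if i < j then cr (s i) (s j) else if j < i then cr (s j) (s i) else 0

lemma ker_symm (s : ℕ → ℤ × ℤ) (i j : ℕ) : ker s i j = ker s j i := by
  unfold ker
  rcases lt_trichotomy i j with h | h | h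
  · simp [h, h.not_gt]
  · simp [h]
  · simp [h, h.not_gt]

/-- The quadratic form of `ker s` on the indicator function of `J`. -/
def Q (s : ℕ → ℤ × ℤ) (J : Finset ℕ) : ℤ := ∑ i ∈ J, ∑ j ∈ J, ker s i j

lemma Q_sdiff (s : ℕ → ℤ × ℤ) {I J : Finset ℕ} (h : I ⊆ J) :
    Q s (J \ I) = Q s J - 2 * ∑ i ∈ I, ∑ j ∈ J, ker s i j + Q s I := by
  have e : ∀ f : ℕ → ℤ, ∑ i ∈ J \ I, f i = ∑ i ∈ J, f i - ∑ i ∈ I, f i := fun f =>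
    eq_sub_of_add_eq (Finset.sum_sdiff h)
  have e2 : ∑ i ∈ J, ∑ j ∈ I, ker s i j = ∑ i ∈ I, ∑ j ∈ J, ker s i j := by
    rw [Finset.sum_comm]
    exact Finset.sum_congr rfl (fun i _ => Finset.sum_congr rfl (fun j _ => ker_symm s j i))
  unfold Q
  simp only [e, Finset.sum_sub_distrib, e2]
  ring

lemma Q_insert (s : ℕ → ℤ × ℤ) {J : Finset ℕ} {a : ℕ} (h : ∀ j ∈ J, j < a) :
    Q s (insert a J) = Q s J + 2 * cr (∑ j ∈ J, s j) (s a) := by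
  have ha : a ∉ J := fun h' => lt_irrefl _ (h a h')
  have e : ∀ K : Finset ℕ, (∀ j ∈ K, j < a) → ∑ j ∈ K, ker s a j = cr (∑ j ∈ K, s j) (s a) := by
    intro K hK
    induction K using Finset.induction_on with
    | empty => simp
    | insert b K hb ih =>
      rw [Finset.sum_insert hb, Finset.sum_insert hb, cr_add_left,
        ih (fun j hj => hK j (by simp [hj]))]
      have := hK b (by simp)
      simp [ker, this, this.not_gt]
  unfold Q
  rw [Finset.sum_insert ha]
  simp only [Finset.sum_insert ha, Finset.sum_add_distrib]
  rw [Finset.sum_congr rfl (fun j _ => ker_symm s j a), e J h]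
  simp [ker]
  ring

lemma exists_list_of_index (s : ℕ → ℤ × ℤ) (J : Finset ℕ) :
    ∃ l : List (ℤ × ℤ), (∀ x ∈ l, ∃ j ∈ J, s j = x) ∧ l.length = J.card ∧
      l.sum = ∑ j ∈ J, s j ∧ 2 * Ar l = Q s J := by
  induction J using Finset.induction_on_max with
  | empty => exact ⟨[], by simp [Q]⟩
  | insert a J h ih =>
    obtain ⟨l, h1, h2, h3, h4⟩ := ih
    have ha : a ∉ J := fun h' => lt_irrefl _ (h a h')
    refine ⟨l ++ [s a], ?_, ?_, ?_, ?_⟩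
    · intro x hx
      rcases List.mem_append.1 hx with hx | hx
      · obtain ⟨j, hj, e⟩ := h1 x hx
        exact ⟨j, by simp [hj], e⟩
      · exact ⟨a, by simp, (List.mem_singleton.1 hx).symm⟩
    · simp [Finset.card_insert_of_notMem ha, h2]
    · simp [Finset.sum_insert ha, h3, add_comm]
    · rw [Q_insert s h, Ar_append, h3, ← h4]
      simp; ring

lemma exists_index_of_list (w : List (ℤ × ℤ)) :
    ∃ s : ℕ → ℤ × ℤ, (∀ j ∈ range w.length, s j ∈ w) ∧
      ∑ j ∈ range w.length, s j = w.sum ∧ Q s (range w.length) = 2 * Ar w := by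
  induction w using List.reverseRecOn with
  | nil => exact ⟨fun _ => 0, by simp [Q]⟩
  | append_singleton w x ih =>
    obtain ⟨s, h1, h2, h3⟩ := ih
    have hs : ∀ j ∈ range w.length, Function.update s w.length x j = s j := by
      intro j hj
      exact Function.update_of_ne (Finset.mem_range.1 hj).ne _ _
    have hsum : ∑ j ∈ range w.length, Function.update s w.length x j = w.sum := by
      rw [Finset.sum_congr rfl hs, h2]
    refine ⟨Function.update s w.length x, ?_, ?_, ?_⟩
    · intro j hj
      simp only [List.length_append, List.length_singleton, Finset.mem_range] at hj
      rcases Nat.lt_succ_iff_lt_or_eq.1 hj with h | h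
      · rw [hs j (by simpa using h)]
        simp [h1 j (by simpa using h)]
      · simp [h]
    · simp only [List.length_append, List.length_singleton, Finset.sum_range_succ, hsum]
      simp
    · simp only [List.length_append, List.length_singleton, Finset.range_add_one]
      rw [Q_insert _ (fun j hj => Finset.mem_range.1 hj), hsum, Ar_append]
      have : Q (Function.update s w.length x) (range w.length) = Q s (range w.length) := by
        unfold Q
        refine Finset.sum_congr rfl (fun i hi => Finset.sum_congr rfl (fun j hj => ?_))
        unfold ker
        rw [hs i hi, hs j hj]
      rw [this, h3]
      simp; ring

lemma abs_ker_le {V : Finset (ℤ × ℤ)} {ρ : ℤ} (hρ : Bdd V ρ) (s : ℕ → ℤ × ℤ) {i j : ℕ}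
    (hi : s i ∈ V) (hj : s j ∈ V) : |ker s i j| ≤ 2 * ρ ^ 2 := by
  have h1 := abs_cr_le (hρ _ hi) (hρ _ hj)
  have h2 := abs_cr_le (hρ _ hj) (hρ _ hi)
  unfold ker
  split_ifs
  · linarith
  · linarith
  · simp; positivity

lemma abs_Q_le {V : Finset (ℤ × ℤ)} {ρ : ℤ} (hρ : Bdd V ρ) (s : ℕ → ℤ × ℤ) (J : Finset ℕ)
    (hJ : ∀ j ∈ J, s j ∈ V) : |Q s J| ≤ 2 * ρ ^ 2 * (#J : ℤ) ^ 2 := by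
  unfold Q
  calc _ ≤ ∑ i ∈ J, |∑ j ∈ J, ker s i j| := Finset.abs_sum_le_sum_abs _ _
    _ ≤ ∑ i ∈ J, ∑ j ∈ J, |ker s i j| :=
        Finset.sum_le_sum (fun i _ => Finset.abs_sum_le_sum_abs _ _)
    _ ≤ ∑ i ∈ J, ∑ j ∈ J, 2 * ρ ^ 2 := Finset.sum_le_sum (fun i hi =>
        Finset.sum_le_sum (fun j hj => abs_ker_le hρ s (hJ i hi) (hJ j hj)))
    _ = _ := by simp; ring

/-- Removing one block of at most average cost scales the area like the square of the length,
up to a bounded error. -/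
lemma exists_remove_block {V : Finset (ℤ × ℤ)} {ρ : ℤ} (hρ : Bdd V ρ) {B : ℕ} {s : ℕ → ℤ × ℤ}
    (hB : ∀ (J : Finset ℕ), (∀ j ∈ J, s j ∈ V) → J.Nonempty →
      ∑ j ∈ J, s j = 0 → ∃ I ⊆ J, I.Nonempty ∧ I.card ≤ B ∧ ∑ j ∈ I, s j = 0)
    (J : Finset ℕ) (hJ : ∀ j ∈ J, s j ∈ V) (hne : J.Nonempty) (h0 : ∑ j ∈ J, s j = 0) :
    ∃ J' ⊆ J, #J' < #J ∧ #J ≤ #J' + B ∧ ∑ j ∈ J', s j = 0 ∧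
      (Q s J : ℝ) * ((#J' : ℝ) / #J) ^ 2 - 4 * ρ ^ 2 * B ^ 2 ≤ Q s J' := by
  have hn : (0 : ℝ) < #J := by exact_mod_cast hne.card_pos
  obtain ⟨I, hIJ, hI, hIB, hI0, hIf⟩ := exists_block_le hB
    -- the marginal contribution of the letter `i` to the area, minus its average over `J`
    (fun i => ((∑ j ∈ J, ker s i j : ℤ) : ℝ) - Q s J / #J) J hJ hne h0 (by
      rw [Finset.sum_sub_distrib, Finset.sum_const, nsmul_eq_mul, mul_div_cancel₀ _ hn.ne']
      simp [Q])
  have hcard : #(J \ I) + #I = #J := Finset.card_sdiff_add_card_eq_card hIJ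
  have hIpos := hI.card_pos
  refine ⟨J \ I, Finset.sdiff_subset, by omega, by omega, ?_, ?_⟩
  · have := Finset.sum_sdiff (f := s) hIJ
    rwa [hI0, add_zero, h0] at this
  · have e := Q_sdiff s hIJ
    have e' : (Q s (J \ I) : ℝ)
        = Q s J - 2 * ∑ i ∈ I, ((∑ j ∈ J, ker s i j : ℤ) : ℝ) + Q s I := by
      rw [e]; push_cast; ring
    have hcr : (#(J \ I) : ℝ) = #J - #I := by
      rw [← hcard]; push_cast; ring
    rw [Finset.sum_sub_distrib, Finset.sum_const, nsmul_eq_mul] at hIf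
    have hQI : -(2 * (ρ : ℝ) ^ 2 * B ^ 2) ≤ Q s I := by
      have h1 := abs_Q_le hρ s I (fun j hj => hJ j (hIJ hj))
      have h2 : |(Q s I : ℝ)| ≤ 2 * ρ ^ 2 * (#I : ℝ) ^ 2 := by exact_mod_cast h1
      have h3 : (#I : ℝ) ≤ B := by exact_mod_cast hIB
      have h4 : 2 * (ρ : ℝ) ^ 2 * (#I : ℝ) ^ 2 ≤ 2 * ρ ^ 2 * B ^ 2 := by gcongr
      linarith [(abs_le.1 h2).1]
    have hQJ : (Q s J : ℝ) * ((#I : ℝ) / #J) ^ 2 ≤ 2 * ρ ^ 2 * B ^ 2 := by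
      have h1 := abs_Q_le hρ s J hJ
      have h2 : |(Q s J : ℝ)| ≤ 2 * ρ ^ 2 * (#J : ℝ) ^ 2 := by exact_mod_cast h1
      have h3 : (#I : ℝ) ≤ B := by exact_mod_cast hIB
      calc _ ≤ 2 * ρ ^ 2 * (#J : ℝ) ^ 2 * ((#I : ℝ) / #J) ^ 2 := by
            gcongr; exact (le_abs_self _).trans h2
        _ = 2 * ρ ^ 2 * (#I : ℝ) ^ 2 := by field_simp
        _ ≤ _ := by gcongr
    have e3 : (Q s J : ℝ) * (((#J : ℝ) - #I) / #J) ^ 2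
        = Q s J - 2 * (#I * (Q s J / #J)) + Q s J * ((#I : ℝ) / #J) ^ 2 := by
      field_simp; ring
    rw [hcr, e3, e']
    linarith

/-- Removal lemma: about `T` letters can be deleted from a closed path, keeping it closed, so
that its area scales like the square of its length up to an error `O(T)`. -/
lemma exists_remove (V : Finset (ℤ × ℤ)) {ρ : ℤ} (hρ : Bdd V ρ) :
    ∃ B : ℕ, ∃ E : ℝ, 0 ≤ E ∧ ∀ w : List (ℤ × ℤ), (∀ x ∈ w, x ∈ V) → w.sum = 0 →
      ∀ T : ℕ, T ≤ w.length → ∃ w' : List (ℤ × ℤ), (∀ x ∈ w', x ∈ V) ∧ w'.sum = 0 ∧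
        w'.length + T ≤ w.length ∧ w.length ≤ w'.length + T + B ∧
        (Ar w : ℝ) / (w.length : ℝ) ^ 2 * (w'.length : ℝ) ^ 2 - E * T ≤ Ar w' := by
  obtain ⟨B, hB⟩ := exists_block V
  refine ⟨B, 2 * ρ ^ 2 * B ^ 2, by positivity, fun w hw h0 T hT => ?_⟩
  obtain ⟨s, hs, hsum, hQ⟩ := exists_index_of_list w
  have hsV : ∀ j ∈ range w.length, s j ∈ V := fun j hj => hw _ (hs j hj)
  have key : ∀ T ≤ w.length, ∃ J ⊆ range w.length, ∑ j ∈ J, s j = 0 ∧ #J + T ≤ w.length ∧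
      w.length ≤ #J + T + B ∧
      (Q s (range w.length) : ℝ) / (w.length : ℝ) ^ 2 * (#J : ℝ) ^ 2
        - 4 * ρ ^ 2 * B ^ 2 * T ≤ Q s J := by
    intro T
    induction T with
    | zero =>
      intro _
      refine ⟨range w.length, subset_rfl, by rw [hsum, h0], by simp, by simp, ?_⟩
      rcases Nat.eq_zero_or_pos w.length with h | h
      · simp [h, Q]
      · have : (0 : ℝ) < w.length := by exact_mod_cast h
        simp only [card_range]
        field_simp
        simp
    | succ T ih =>
      intro hT
      obtain ⟨J, hJ, hJ0, hJ1, hJ2, hJQ⟩ := ih (by omega)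
      by_cases hlt : #J + (T + 1) ≤ w.length
      · refine ⟨J, hJ, hJ0, hlt, by omega, le_trans ?_ hJQ⟩
        have : 0 ≤ 4 * (ρ : ℝ) ^ 2 * B ^ 2 := by positivity
        push_cast
        linarith
      have hpos : 0 < #J := by omega
      obtain ⟨J', hJ', c1, c2, h0', hQ'⟩ := exists_remove_block hρ (fun J => hB s J) J
        (fun j hj => hsV j (hJ hj)) (Finset.card_pos.1 hpos) hJ0
      refine ⟨J', hJ'.trans hJ, h0', by omega, by omega, le_trans ?_ hQ'⟩
      have hn : (0 : ℝ) < #J := by exact_mod_cast hpos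
      have hle : ((#J' : ℝ) / #J) ^ 2 ≤ 1 := by
        have : (#J' : ℝ) ≤ #J := by exact_mod_cast c1.le
        have : (#J' : ℝ) / #J ≤ 1 := (div_le_one hn).2 this
        exact pow_le_one₀ (by positivity) this
      have hnn : 0 ≤ ((#J' : ℝ) / #J) ^ 2 := by positivity
      have m1 := mul_le_mul_of_nonneg_right hJQ hnn
      have e1 : ((Q s (range w.length) : ℝ) / (w.length : ℝ) ^ 2 * (#J : ℝ) ^ 2
          - 4 * ρ ^ 2 * B ^ 2 * T) * ((#J' : ℝ) / #J) ^ 2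
          = (Q s (range w.length) : ℝ) / (w.length : ℝ) ^ 2 * (#J' : ℝ) ^ 2
            - 4 * ρ ^ 2 * B ^ 2 * T * ((#J' : ℝ) / #J) ^ 2 := by
        field_simp
      have m2 : 4 * (ρ : ℝ) ^ 2 * B ^ 2 * T * ((#J' : ℝ) / #J) ^ 2
          ≤ 4 * (ρ : ℝ) ^ 2 * B ^ 2 * T := mul_le_of_le_one_right (by positivity) hle
      push_cast
      linarith
  obtain ⟨J, hJ, hJ0, hJ1, hJ2, hJQ⟩ := key T hT
  obtain ⟨l, l1, l2, l3, l4⟩ := exists_list_of_index s J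
  refine ⟨l, ?_, by rw [l3, hJ0], by omega, by omega, ?_⟩
  · intro x hx
    obtain ⟨j, hj, rfl⟩ := l1 x hx
    exact hsV j (hJ hj)
  · rw [hQ, ← l4] at hJQ
    rw [l2]
    push_cast at hJQ
    have e1 : (2 * (Ar w : ℝ)) / (w.length : ℝ) ^ 2 * (#J : ℝ) ^ 2
        = 2 * ((Ar w : ℝ) / (w.length : ℝ) ^ 2 * (#J : ℝ) ^ 2) := by ring
    rw [e1] at hJQ
    linarith

end

/-! ### Moving the endpoint and gaining area -/

/-- The real arithmetic behind `exists_shift`: `a`, `a₁`, `a'` are the areas, and `N`, `N₁`,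
`N₁ + T` the lengths, before the shift, after deletion, and after insertion. -/
lemma shift_arith {κ E c B N N₁ T α a a₁ a' av : ℝ} (hκ0 : 0 ≤ κ) (hE : 0 ≤ E)
    (hArw : |a| ≤ κ * N ^ 2) (hArv : |av| ≤ κ * T ^ 2) (hαT : α ≤ T) (hcT : T ≤ α + c)
    (rN : 16 + 4 * B + 4 * c ≤ N) (rT2 : T ^ 2 ≤ N) (rT4 : 4 * T ≤ N) (rl1 : N₁ + T ≤ N)
    (rl2 : N ≤ N₁ + T + B) (rT0 : 0 ≤ T) (rB : 0 ≤ B) (rc : 0 ≤ c)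
    (hA1 : a / N ^ 2 * N₁ ^ 2 - E * T ≤ a₁)
    (hins : 2 * (α * a₁) ≤ (a' - a₁ - av) * N₁) :
    a - (κ + 3 * E + κ * (2 * (B + c) + 2 + 2 * c ^ 2)) * N ≤ a' := by
  have hN1 : N / 2 ≤ N₁ := by linarith
  have hN1pos : 0 < N₁ := by linarith
  have hNpos : 0 < N := by linarith
  obtain ⟨r, hr⟩ : ∃ r, r = a / N ^ 2 := ⟨_, rfl⟩
  have hrN : a = r * N ^ 2 := by rw [hr]; field_simp
  have hrκ : |r| ≤ κ := by
    rw [hr, abs_div, div_le_iff₀ (by positivity), abs_of_pos (by positivity : 0 < N ^ 2)]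
    exact hArw
  rw [← hr] at hA1
  have hq0 : 0 ≤ 1 + 2 * α / N₁ := by
    have : -1 ≤ 2 * α / N₁ := by rw [le_div_iff₀ hN1pos]; linarith
    linarith
  have hq3 : 1 + 2 * α / N₁ ≤ 3 := by
    have : 2 * α / N₁ ≤ 2 := by rw [div_le_iff₀ hN1pos]; linarith
    linarith
  have h1 : a₁ * (1 + 2 * α / N₁) + av ≤ a' := by
    have : 2 * (α * a₁) / N₁ ≤ a' - a₁ - av := by rw [div_le_iff₀ hN1pos]; exact hins
    have e : a₁ * (1 + 2 * α / N₁) = a₁ + 2 * (α * a₁) / N₁ := by ring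
    linarith
  have h2 : (r * N₁ ^ 2 - E * T) * (1 + 2 * α / N₁) ≤ a₁ * (1 + 2 * α / N₁) :=
    mul_le_mul_of_nonneg_right hA1 hq0
  -- Deletion leaves `r * N₁ ^ 2` of the area and insertion multiplies it by `1 + 2 * α / N₁`; since
  -- `N₁ + α` is `N` up to a constant, the product is `r * N ^ 2` up to `O(α ^ 2 + N) = O(N)`.
  have h3 : (r * N₁ ^ 2 - E * T) * (1 + 2 * α / N₁)
      = r * (N₁ ^ 2 + 2 * α * N₁) - E * T * (1 + 2 * α / N₁) := by
    field_simp
  have hTN : T ≤ N := by linarith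
  have h4 : E * T * (1 + 2 * α / N₁) ≤ 3 * E * N := by
    calc _ ≤ E * T * 3 := mul_le_mul_of_nonneg_left hq3 (by positivity)
      _ = 3 * E * T := by ring
      _ ≤ _ := by gcongr
  have hα2 : α ^ 2 ≤ 2 * N + 2 * c ^ 2 * N := by
    have : α ^ 2 ≤ (T + c) ^ 2 := by
      apply sq_le_sq'
      · linarith
      · linarith
    have h5 : c ^ 2 ≤ c ^ 2 * N := le_mul_of_one_le_right (by positivity) (by linarith)
    nlinarith [sq_nonneg (T - c)]
  have h5 : |N₁ ^ 2 + 2 * α * N₁ - N ^ 2| ≤ (2 * (B + c) + 2 + 2 * c ^ 2) * N := by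
    have e : N₁ ^ 2 + 2 * α * N₁ - N ^ 2 = -((N - N₁ - α) * (N₁ + α + N)) - α ^ 2 := by ring
    have b1 : (N - N₁ - α) * (N₁ + α + N) ≤ (B + c) * (2 * N) := by
      apply mul_le_mul <;> linarith
    have b2 : 0 ≤ (N - N₁ - α) * (N₁ + α + N) := by
      apply mul_nonneg <;> linarith
    rw [e, abs_le]
    constructor
    · linarith
    · nlinarith [sq_nonneg α, mul_nonneg (add_nonneg rB rc) hNpos.le, sq_nonneg c]
  have h6 : r * N ^ 2 - κ * ((2 * (B + c) + 2 + 2 * c ^ 2) * N)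
      ≤ r * (N₁ ^ 2 + 2 * α * N₁) := by
    have : |r * (N₁ ^ 2 + 2 * α * N₁ - N ^ 2)| ≤ κ * ((2 * (B + c) + 2 + 2 * c ^ 2) * N) := by
      rw [abs_mul]; exact mul_le_mul hrκ h5 (abs_nonneg _) hκ0
    linarith [(abs_le.1 this).1]
  have h7 : -(κ * N) ≤ av := by
    have : κ * T ^ 2 ≤ κ * N := by gcongr
    linarith [(abs_le.1 hArv).1]
  rw [hrN]
  linarith

/-- Shifting the endpoint: a closed path can be turned, without getting longer, into a path
ending near `v.sum`, losing only `O(length)` of area. Deleting `v'.length` letters costs twice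
that fraction of the area, and inserting the quasi-geodesic `v'` gives it back. -/
lemma exists_shift (V : Finset (ℤ × ℤ)) (hV0 : (0 : ℤ × ℤ) ∈ V)
    (hVs : ∀ x ∈ V, -x ∈ V) {ρ : ℤ} (hρ : Bdd V ρ) :
    ∃ (K : ℝ) (N₀ : ℕ), 0 ≤ K ∧ ∀ w : List (ℤ × ℤ), (∀ x ∈ w, x ∈ V) → w.sum = 0 →
      N₀ ≤ w.length → ∀ v : List (ℤ × ℤ), (∀ x ∈ v, x ∈ V) → v.length ^ 2 ≤ w.length →
      ∃ w' : List (ℤ × ℤ), (∀ x ∈ w', x ∈ V) ∧ w'.length ≤ w.length ∧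
        |w'.sum.1 - v.sum.1| ≤ ρ * V.card ∧ |w'.sum.2 - v.sum.2| ≤ ρ * V.card ∧
        (Ar w : ℝ) - K * w.length ≤ Ar w' := by
  obtain ⟨B, E, hE, hrem⟩ := exists_remove V hρ
  obtain ⟨κ, hκ⟩ : ∃ κ : ℝ, κ = 2 * ρ ^ 2 := ⟨_, rfl⟩
  have hκ0 : 0 ≤ κ := by rw [hκ]; positivity
  obtain ⟨c, hc⟩ : ∃ c : ℕ, c = V.card + 1 := ⟨_, rfl⟩
  refine ⟨κ + 3 * E + κ * (2 * (B + c) + 2 + 2 * c ^ 2), 16 + 4 * B + 4 * c, by positivity,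
    fun w hw h0 hN v hv hvN => ?_⟩
  obtain ⟨A, v', hA, hv', hlen, hgeo, hs1, hs2⟩ := exists_geodesic V hV0 hVs hρ v hv
  have hT2 : v'.length ^ 2 ≤ w.length := (Nat.pow_le_pow_left hlen 2).trans hvN
  have hT4 : 4 * v'.length ≤ w.length := by
    by_contra h
    push Not at h
    nlinarith
  obtain ⟨w₁, hw₁, hw₁0, hl1, hl2, hA1⟩ := hrem w hw h0 v'.length (by omega)
  obtain ⟨w', hw', hl', hsum', hins⟩ := exists_insert A hA w₁ v' hw₁ hv' hw₁0
  refine ⟨w', hw', by omega, by rw [hsum']; exact hs1, by rw [hsum']; exact hs2, ?_⟩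
  have hαT := al_sum_le A v' (fun x hx => hA x (hv' x hx))
  have hArw : |(Ar w : ℝ)| ≤ κ * (w.length : ℝ) ^ 2 := by
    rw [hκ]; exact_mod_cast hρ.Ar w hw
  have hArv : |(Ar v' : ℝ)| ≤ κ * (v'.length : ℝ) ^ 2 := by
    rw [hκ]; exact_mod_cast hρ.Ar v' hv'
  have hcT : (v'.length : ℝ) ≤ al A v'.sum + c := by rw [hc]; push_cast; exact hgeo
  have rN : (16 : ℝ) + 4 * B + 4 * c ≤ w.length := by exact_mod_cast hN
  have rT2 : (v'.length : ℝ) ^ 2 ≤ w.length := by exact_mod_cast hT2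
  have rT4 : 4 * (v'.length : ℝ) ≤ w.length := by exact_mod_cast hT4
  have rl1 : (w₁.length : ℝ) + v'.length ≤ w.length := by exact_mod_cast hl1
  have rl2 : (w.length : ℝ) ≤ w₁.length + v'.length + B := by exact_mod_cast hl2
  have rT0 : (0 : ℝ) ≤ v'.length := Nat.cast_nonneg _
  have rB : (0 : ℝ) ≤ B := Nat.cast_nonneg _
  have rc : (0 : ℝ) ≤ c := Nat.cast_nonneg _
  exact shift_arith hκ0 hE hArw hArv hαT hcT rN rT2 rT4 rl1 rl2 rT0 rB rc hA1 hins

/-- A long closed path of area quadratic in its length gains area linear in the length when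
`2 * k` letters are added. -/
lemma exists_gain (V : Finset (ℤ × ℤ)) (hVs : ∀ x ∈ V, -x ∈ V) {ρ : ℤ} (hρ : Bdd V ρ)
    (x : ℤ × ℤ) (hx : x ∈ V) (hx0 : x ≠ 0) {δ : ℝ} (hδ : 0 < δ) :
    ∃ θ : ℝ, 0 < θ ∧ ∀ (k : ℕ) (w : List (ℤ × ℤ)), (∀ y ∈ w, y ∈ V) → w.sum = 0 →
      0 < w.length → δ * (w.length : ℝ) ^ 2 ≤ Ar w →
      ∃ w' : List (ℤ × ℤ), (∀ y ∈ w', y ∈ V) ∧ w'.sum = 0 ∧ w'.length = w.length + 2 * k ∧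
        (Ar w : ℝ) + θ * k * w.length ≤ Ar w' := by
  obtain ⟨q, hq⟩ : ∃ q : ℝ, q = 2 * ρ ^ 2 := ⟨_, rfl⟩
  have hxsq : 0 < (x.1 : ℝ) ^ 2 + (x.2 : ℝ) ^ 2 := by
    rcases eq_or_ne x.1 0 with h | h
    · have h2 : x.2 ≠ 0 := fun h2 => hx0 (Prod.ext h h2)
      have : (x.2 : ℝ) ≠ 0 := by exact_mod_cast h2
      positivity
    · have : (x.1 : ℝ) ≠ 0 := by exact_mod_cast h
      positivity
  have hdot : ∀ y ∈ V, |(x.1 : ℝ) * y.1 + x.2 * y.2| ≤ q := by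
    intro y hy
    have h1 := abs_cr_le (hρ x hx) (q := (-y.2, y.1)) (s := ρ)
      ⟨by simpa using (hρ y hy).2, by simpa using (hρ y hy).1⟩
    have h2 : |x.1 * y.1 + x.2 * y.2| ≤ 2 * (ρ * ρ) := by
      simpa [cr] using h1
    have h3 : |(x.1 : ℝ) * y.1 + x.2 * y.2| ≤ 2 * (ρ * ρ) := by exact_mod_cast h2
    rw [hq]; linarith
  have hq0 : 0 < q := by
    have := (le_abs_self _).trans (hdot x hx)
    nlinarith
  -- `A` is the scaled orthogonal projection to the direction of `x`.
  obtain ⟨A, hAdef⟩ : ∃ A : ℝ × ℝ, A = (x.1 / q, x.2 / q) := ⟨_, rfl⟩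
  have hAy : ∀ y, al A y = ((x.1 : ℝ) * y.1 + x.2 * y.2) / q := by
    intro y; rw [hAdef]; simp only [al]; ring
  have hA : ∀ y ∈ V, |al A y| ≤ 1 := by
    intro y hy
    rw [hAy, abs_div, abs_of_pos hq0, div_le_one hq0]
    exact hdot y hy
  have hAx : 0 < al A x := by
    rw [hAy]; apply div_pos _ hq0; nlinarith
  refine ⟨2 * al A x * δ, by positivity, fun k w hw h0 hl hδw => ?_⟩
  obtain ⟨w', hw', hl', hs', hins⟩ := exists_insert A hA w (List.replicate k x) hw
    (fun y hy => by rw [List.eq_of_mem_replicate hy]; exact hx) h0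
  have hsx : (List.replicate k x).sum = k • x := by simp
  have hs'' : (List.replicate k (-x)).sum = -(k • x) := by simp
  -- Inserting `k` copies of `x` at the widest chord gains the area; appending `k` copies of `-x`
  -- closes the path at no cost, since they run along the closing chord.
  refine ⟨w' ++ List.replicate k (-x), ?_, ?_, ?_, ?_⟩
  · intro y hy
    rcases List.mem_append.1 hy with h | h
    · exact hw' y h
    · rw [List.eq_of_mem_replicate h]; exact hVs x hx
  · rw [List.sum_append, hs', hs'', hsx]; simp
  · simp [hl']; ring
  · have e : Ar (w' ++ List.replicate k (-x)) = Ar w' := by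
      rw [Ar_append, hs', hs'', hsx, Ar_replicate, cr_neg_right, cr_self]; simp
    rw [e]
    rw [Ar_replicate, hsx] at hins
    have e2 : al A (k • x) = k * al A x := by
      simp [al]; ring
    rw [e2] at hins
    have hlr : (0 : ℝ) < w.length := by exact_mod_cast hl
    have h1 : 2 * (k * al A x) * (δ * (w.length : ℝ) ^ 2) ≤ 2 * (k * al A x) * Ar w := by
      gcongr
    have h2 : (2 * al A x * δ * k * w.length) * w.length ≤ ((Ar w' : ℝ) - Ar w) * w.length := by
      push_cast at hins
      linarith
    have := le_of_mul_le_mul_right h2 hlr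
    linarith

/-- Closed paths of every large length with area quadratic in the length. -/
lemma exists_fat (V : Finset (ℤ × ℤ)) (hV0 : (0 : ℤ × ℤ) ∈ V) (hVs : ∀ x ∈ V, -x ∈ V)
    (hcr : ∃ x ∈ V, ∃ y ∈ V, cr x y ≠ 0) (N : ℕ) (hN : 8 ≤ N) :
    ∃ w : List (ℤ × ℤ), (∀ x ∈ w, x ∈ V) ∧ w.sum = 0 ∧ w.length = N ∧
      (1 / 32 : ℝ) * (N : ℝ) ^ 2 ≤ Ar w := by
  obtain ⟨x, hx, y, hy, hpos⟩ : ∃ x ∈ V, ∃ y ∈ V, 1 ≤ cr x y := by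
    obtain ⟨x, hx, y, hy, h⟩ := hcr
    rcases lt_or_gt_of_ne h with h | h
    · exact ⟨y, hy, x, hx, by rw [cr_swap]; omega⟩
    · exact ⟨x, hx, y, hy, by omega⟩
  obtain ⟨p, hp⟩ : ∃ p, p = N / 4 := ⟨_, rfl⟩
  obtain ⟨w, hwdef⟩ : ∃ w, w = List.replicate p x ++ (List.replicate p y ++
    (List.replicate p (-x) ++ (List.replicate p (-y) ++ List.replicate (N - 4 * p) 0))) :=
    ⟨_, rfl⟩
  refine ⟨w, ?_, ?_, ?_, ?_⟩
  · intro z hz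
    rw [hwdef] at hz
    simp only [List.mem_append] at hz
    rcases hz with h | h | h | h | h <;> rw [List.eq_of_mem_replicate h]
    exacts [hx, hy, hVs x hx, hVs y hy, hV0]
  · rw [hwdef]; simp
  · rw [hwdef]; simp; omega
  · have hA : Ar w = 2 * (p : ℤ) ^ 2 * cr x y := by
      rw [hwdef]
      simp [Ar_append, Ar_replicate, cr]
      ring
    have h8 : N ≤ 8 * p := by omega
    have h8' : (N : ℝ) ≤ 8 * p := by exact_mod_cast h8
    have hposR : (1 : ℝ) ≤ cr x y := by exact_mod_cast hpos
    rw [hA]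
    push_cast
    calc (1 / 32 : ℝ) * (N : ℝ) ^ 2 ≤ (1 / 32 : ℝ) * (8 * p) ^ 2 := by gcongr
      _ = 2 * (p : ℝ) ^ 2 * 1 := by ring
      _ ≤ 2 * (p : ℝ) ^ 2 * cr x y := by gcongr

/-- Planar form of the almost-dead-end property: with boundedly many additional letters, a closed
path of length `N` can be moved to end near any `v.sum` with `v.length ^ 2 ≤ N`, while its area
grows by any prescribed multiple of `N`. -/
lemma exists_planar (V : Finset (ℤ × ℤ)) (hV0 : (0 : ℤ × ℤ) ∈ V) (hVs : ∀ x ∈ V, -x ∈ V)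
    {ρ : ℤ} (hρ : Bdd V ρ) (hcr : ∃ x ∈ V, ∃ y ∈ V, cr x y ≠ 0) (K' : ℝ) :
    ∃ M N₀ : ℕ, ∀ w : List (ℤ × ℤ), (∀ x ∈ w, x ∈ V) → w.sum = 0 → N₀ ≤ w.length →
      ∀ v : List (ℤ × ℤ), (∀ x ∈ v, x ∈ V) → v.length ^ 2 ≤ w.length →
      ∃ w' : List (ℤ × ℤ), (∀ x ∈ w', x ∈ V) ∧ w'.length ≤ w.length + M ∧
        |w'.sum.1 - v.sum.1| ≤ ρ * V.card ∧ |w'.sum.2 - v.sum.2| ≤ ρ * V.card ∧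
        (Ar w : ℝ) + K' * w.length ≤ Ar w' := by
  obtain ⟨K, N₁, hK, hshift⟩ := exists_shift V hV0 hVs hρ
  obtain ⟨x, hx, hx0⟩ : ∃ x ∈ V, x ≠ 0 := by
    obtain ⟨x, hx, y, hy, h⟩ := hcr
    exact ⟨x, hx, fun h0 => h (by simp [h0])⟩
  obtain ⟨θ, hθ, hgain⟩ := exists_gain V hVs hρ x hx hx0 (δ := 1 / 32) (by norm_num)
  obtain ⟨k, hk⟩ := exists_nat_ge ((K' + 2 * K) / θ)
  rw [div_le_iff₀ hθ] at hk
  -- The gain `θ * k` per unit length has to beat `K'` and twice the loss `K` of the shift, the path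
  -- being at most twice as long when it is shifted as it was initially.
  refine ⟨2 * k, N₁ + 8 + 2 * k, fun w hw h0 hN v hv hvN => ?_⟩
  obtain ⟨w₁, hw₁, hw₁0, hl₁, hA₁, hA₁'⟩ : ∃ w₁ : List (ℤ × ℤ), (∀ x ∈ w₁, x ∈ V) ∧
      w₁.sum = 0 ∧ w₁.length = w.length ∧ (1 / 32 : ℝ) * (w.length : ℝ) ^ 2 ≤ Ar w₁ ∧
      (Ar w : ℝ) ≤ Ar w₁ := by
    by_cases hfat : (1 / 32 : ℝ) * (w.length : ℝ) ^ 2 ≤ Ar w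
    · exact ⟨w, hw, h0, rfl, hfat, le_rfl⟩
    · obtain ⟨w₁, a, b, c, d⟩ := exists_fat V hV0 hVs hcr w.length (by omega)
      exact ⟨w₁, a, b, c, d, (not_le.1 hfat).le.trans d⟩
  obtain ⟨w₂, hw₂, hw₂0, hl₂, hA₂⟩ := hgain k w₁ hw₁ hw₁0 (by omega) (by rw [hl₁]; exact hA₁)
  obtain ⟨w', hw', hl', h1, h2, hA'⟩ := hshift w₂ hw₂ hw₂0 (by omega) v hv (by omega)
  refine ⟨w', hw', by omega, h1, h2, ?_⟩
  have rl₂ : (w₂.length : ℝ) = w.length + 2 * k := by rw [hl₂, hl₁]; push_cast; ring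
  have rN : 2 * (k : ℝ) ≤ w.length := by
    have : 2 * k ≤ w.length := by omega
    exact_mod_cast this
  rw [rl₂] at hA'
  rw [hl₁] at hA₂
  have m1 : (K' + 2 * K) * (w.length : ℝ) ≤ k * θ * w.length := by gcongr
  have m2 : K * (2 * (k : ℝ)) ≤ K * w.length := by gcongr
  linarith

/-! ### Words in the Heisenberg group -/

/-- The projection of `H₃(ℤ)` to its abelianization `ℤ²`. -/
def pr (g : H3Z) : ℤ × ℤ := (g.a, g.b)

/-- Twice the central coordinate of `g` in the symmetric (exponential) coordinates, where the
group law reads `en (g * h) = en g + en h + cr (pr g) (pr h)`. -/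
def en (g : H3Z) : ℤ := 2 * g.c - g.a * g.b

@[simp] lemma pr_one : pr 1 = 0 := rfl
@[simp] lemma pr_mul (g h : H3Z) : pr (g * h) = pr g + pr h := rfl
@[simp] lemma pr_inv (g : H3Z) : pr g⁻¹ = -pr g := rfl
@[simp] lemma en_one : en 1 = 0 := by simp [en]
lemma en_mul (g h : H3Z) : en (g * h) = en g + en h + cr (pr g) (pr h) := by
  simp [en, cr, pr]; ring
lemma en_inv (g : H3Z) : en g⁻¹ = -en g := by
  simp [en]; ring

lemma pr_en_injective : Function.Injective fun g => (pr g, en g) := by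
  intro g h hgh
  simp only [pr, en, Prod.mk.injEq] at hgh
  obtain ⟨⟨h1, h2⟩, h3⟩ := hgh
  rw [h1, h2] at h3
  ext
  · exact h1
  · exact h2
  · linarith

lemma pr_prod (l : List H3Z) : pr l.prod = (l.map pr).sum := by
  induction l with
  | nil => simp
  | cons x l ih => simp [ih]

lemma en_prod (l : List H3Z) : en l.prod = Ar (l.map pr) + (l.map en).sum := by
  induction l with
  | nil => simp
  | cons x l ih => simp [en_mul, ih, pr_prod]; ring

lemma abs_sum_en_le {T : Set H3Z} {κ : ℤ} (hκ : ∀ x ∈ T, |en x| ≤ κ) (l : List H3Z)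
    (hl : ∀ x ∈ l, x ∈ T) : |(l.map en).sum| ≤ κ * l.length := by
  induction l with
  | nil => simp
  | cons x l ih =>
    have h1 := hκ x (hl x (by simp))
    have h2 := ih (fun y hy => hl y (by simp [hy]))
    simp only [List.map_cons, List.sum_cons, List.length_cons]
    push_cast
    have := abs_add_le (en x) (l.map en).sum
    linarith

/-- Discrete intermediate value theorem: rearranging one adjacent pair of letters at a time moves
`en` by at most `κ`, so reorderings of a word realize every intermediate value up to `κ`. -/
lemma exists_perm_near {T : Set H3Z} {κ : ℤ} (h0 : 0 ≤ κ)
    (hκ : ∀ x ∈ T, ∀ y ∈ T, 2 * |cr (pr x) (pr y)| ≤ κ)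
    {l l' : List H3Z} (h : l.Perm l') (hl : ∀ x ∈ l, x ∈ T) (t : ℤ)
    (ht : t ∈ Set.uIcc (en l.prod) (en l'.prod)) :
    ∃ l'' : List H3Z, l''.Perm l ∧ |en l''.prod - t| ≤ κ := by
  induction h generalizing t with
  | nil =>
    refine ⟨[], List.Perm.refl _, ?_⟩
    simp only [List.prod_nil, en_one, Set.uIcc_self, Set.mem_singleton_iff] at ht
    simpa [ht] using h0
  | @cons x l₁ l₂ hp ih =>
    have e : pr l₂.prod = pr l₁.prod := by
      rw [pr_prod, pr_prod]; exact ((hp.map pr).sum_eq).symm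
    simp only [List.prod_cons, en_mul, e] at ht
    obtain ⟨l'', h1, h2⟩ := ih (fun y hy => hl y (by simp [hy]))
      (t - en x - cr (pr x) (pr l₁.prod)) (by
        rw [Set.mem_uIcc] at ht ⊢
        rcases ht with ht | ht
        · left; constructor <;> linarith [ht.1, ht.2]
        · right; constructor <;> linarith [ht.1, ht.2])
    refine ⟨x :: l'', h1.cons x, ?_⟩
    have e' : pr l''.prod = pr l₁.prod := by
      rw [pr_prod, pr_prod]; exact (h1.map pr).sum_eq
    rw [List.prod_cons, en_mul, e']
    convert h2 using 2
    ring
  | swap x y l =>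
    refine ⟨_, List.Perm.refl _, ?_⟩
    have hxy := hκ x (hl x (by simp)) y (hl y (by simp))
    have hd : en (x :: y :: l).prod - en (y :: x :: l).prod = 2 * cr (pr x) (pr y) := by
      simp only [List.prod_cons, en_mul, pr_mul, cr_add_right]
      rw [cr_swap (pr y) (pr x)]; ring
    have hd' : |en (x :: y :: l).prod - en (y :: x :: l).prod| ≤ κ := by
      rw [hd, abs_mul]; simpa using hxy
    rw [abs_le] at hd' ⊢
    rw [Set.mem_uIcc] at ht
    rcases ht with ht | ht <;> constructor <;> linarith [ht.1, ht.2, hd'.1, hd'.2]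
  | @trans l₁ l₂ l₃ h12 _ ih1 ih2 =>
    rcases Set.uIcc_subset_uIcc_union_uIcc (b := en l₂.prod) ht with ht | ht
    · exact ih1 hl t ht
    · obtain ⟨l'', h1, h2⟩ := ih2 (fun x hx => hl x (h12.symm.subset hx)) t ht
      exact ⟨l'', h1.trans h12.symm, h2⟩

section Words

variable {G : Type*} [Group G] {T : Set G}

lemma exists_word (h1 : ∀ s ∈ T, s⁻¹ ∈ T) (h2 : Subgroup.closure T = ⊤) (g : G) :
    ∃ l : List G, (∀ x ∈ l, x ∈ T) ∧ l.prod = g := by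
  have hg : g ∈ Subgroup.closure T := by rw [h2]; trivial
  induction hg using Subgroup.closure_induction with
  | mem x hx => exact ⟨[x], by simpa using hx, by simp⟩
  | one => exact ⟨[], by simp, by simp⟩
  | mul x y _ _ hx hy =>
    obtain ⟨l, hl, rfl⟩ := hx
    obtain ⟨l', hl', rfl⟩ := hy
    refine ⟨l ++ l', fun z hz => ?_, by simp⟩
    rcases List.mem_append.1 hz with h | h
    · exact hl z h
    · exact hl' z h
  | inv x _ hx =>
    obtain ⟨l, hl, rfl⟩ := hx
    refine ⟨(l.map (·⁻¹)).reverse, fun z hz => ?_, (List.prod_inv_reverse l).symm⟩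
    obtain ⟨y, hy, rfl⟩ := List.mem_map.1 (List.mem_reverse.1 hz)
    exact h1 y (hl y hy)

lemma pad_word (h0 : (1 : G) ∈ T) {n : ℕ} (l : List G) (hl : ∀ x ∈ l, x ∈ T)
    (hn : l.length ≤ n) :
    ∃ l' : List G, (∀ x ∈ l', x ∈ T) ∧ l'.length = n ∧ l'.prod = l.prod := by
  refine ⟨l ++ List.replicate (n - l.length) 1, ?_, by simp; omega, by simp⟩
  intro x hx
  rcases List.mem_append.1 hx with h | h
  · exact hl x h
  · rw [List.eq_of_mem_replicate h]; exact h0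

lemma exists_word_finite (h0 : (1 : G) ∈ T) (h1 : ∀ s ∈ T, s⁻¹ ∈ T)
    (h2 : Subgroup.closure T = ⊤) {F : Set G} (hF : F.Finite) :
    ∃ M : ℕ, ∀ g ∈ F, ∃ l : List G, (∀ x ∈ l, x ∈ T) ∧ l.length = M ∧ l.prod = g := by
  choose f hf hfp using exists_word h1 h2
  obtain ⟨M, hM⟩ := (hF.image fun g => (f g).length).bddAbove
  refine ⟨M, fun g hg => ?_⟩
  obtain ⟨l, a, b, c⟩ := pad_word h0 (f g) (hf g) (hM ⟨g, hg, rfl⟩)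
  exact ⟨l, a, b, c.trans (hfp g)⟩

end Words

lemma finite_ball (R κ : ℤ) :
    {g : H3Z | (|(pr g).1| ≤ R ∧ |(pr g).2| ≤ R) ∧ |en g| ≤ κ}.Finite := by
  refine (((Set.finite_Icc (-R) R).prod (Set.finite_Icc (-R) R)).prod
    (Set.finite_Icc (-κ) κ)).preimage (f := fun g => (pr g, en g))
    pr_en_injective.injOn |>.subset ?_
  rintro g ⟨⟨h1, h2⟩, h3⟩
  exact ⟨⟨abs_le.1 h1, abs_le.1 h2⟩, abs_le.1 h3⟩

/-- A generating set of `H₃(ℤ)` does not project into a line of `ℤ²`. -/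
lemma exists_cr_ne {T : Set H3Z} (h1 : ∀ s ∈ T, s⁻¹ ∈ T) (h2 : Subgroup.closure T = ⊤) :
    ∃ x ∈ T, ∃ y ∈ T, cr (pr x) (pr y) ≠ 0 := by
  by_contra! h
  have hA : ∀ l : List H3Z, (∀ x ∈ l, x ∈ T) → ∀ y ∈ T, cr (pr l.prod) (pr y) = 0 := by
    intro l hl y hy
    induction l with
    | nil => simp
    | cons x l ih =>
      rw [List.prod_cons, pr_mul, cr_add_left, h x (hl x (by simp)) y hy,
        ih (fun z hz => hl z (by simp [hz])), add_zero]
  have hB : ∀ l l' : List H3Z, (∀ x ∈ l, x ∈ T) → (∀ x ∈ l', x ∈ T) →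
      cr (pr l.prod) (pr l'.prod) = 0 := by
    intro l l' hl hl'
    induction l' with
    | nil => simp
    | cons x l' ih =>
      rw [List.prod_cons, pr_mul, cr_add_right, hA l hl x (hl' x (by simp)),
        ih (fun z hz => hl' z (by simp [hz])), add_zero]
  obtain ⟨l, hl, hp⟩ := exists_word h1 h2 ⟨1, 0, 0⟩
  obtain ⟨l', hl', hp'⟩ := exists_word h1 h2 ⟨0, 1, 0⟩
  have := hB l l' hl hl'
  rw [hp, hp'] at this
  simp [cr, pr] at this

lemma exists_lift {T : Set H3Z} (l : List (ℤ × ℤ)) (hl : ∀ x ∈ l, x ∈ pr '' T) :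
    ∃ l' : List H3Z, (∀ x ∈ l', x ∈ T) ∧ l'.map pr = l := by
  induction l with
  | nil => exact ⟨[], by simp⟩
  | cons x l ih =>
    obtain ⟨l', h1, h2⟩ := ih (fun y hy => hl y (by simp [hy]))
    obtain ⟨g, hg, hgx⟩ := hl x (by simp)
    refine ⟨g :: l', ?_, by simp [h2, hgx]⟩
    intro y hy
    rcases List.mem_cons.1 hy with rfl | hy
    · exact hg
    · exact h1 y hy

/-- Uniform bounds for the letters of `T`. -/
lemma exists_bounds {T : Set H3Z} (hT : T.Finite) : ∃ ρ κ : ℤ, 0 ≤ ρ ∧ 0 ≤ κ ∧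
    (∀ x ∈ T, |(pr x).1| ≤ ρ ∧ |(pr x).2| ≤ ρ) ∧ ∀ x ∈ T, |en x| ≤ κ := by
  obtain ⟨r, hr⟩ := (hT.image fun x => |(pr x).1| + |(pr x).2|).bddAbove
  obtain ⟨k, hk⟩ := (hT.image fun x => |en x|).bddAbove
  refine ⟨max r 0, max k 0, le_max_right _ _, le_max_right _ _, fun x hx => ?_, fun x hx =>
    (hk ⟨x, hx, rfl⟩).trans (le_max_left _ _)⟩
  have h : |(pr x).1| + |(pr x).2| ≤ r := hr ⟨x, hx, rfl⟩
  have h3 := le_max_left r 0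
  constructor <;> linarith [abs_nonneg (pr x).1, abs_nonneg (pr x).2]

/-- The one-factor statement: if the closed word `w` is long compared with the square of the length
of `v`, then `w.prod * v.prod` is spelled with only boundedly many letters more than `w`. -/
lemma heisenberg_word {T : Set H3Z} (hT : T.Finite) (h0 : (1 : H3Z) ∈ T)
    (h1 : ∀ s ∈ T, s⁻¹ ∈ T) (h2 : Subgroup.closure T = ⊤) :
    ∃ M N₀ : ℕ, ∀ w : List H3Z, (∀ x ∈ w, x ∈ T) → pr w.prod = 0 → N₀ ≤ w.length →
      ∀ v : List H3Z, (∀ x ∈ v, x ∈ T) → v.length ^ 2 ≤ w.length →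
      ∃ l : List H3Z, (∀ x ∈ l, x ∈ T) ∧ l.length = w.length + M ∧
        l.prod = w.prod * v.prod := by
  classical
  obtain ⟨ρ, κ, hρ0, hκ0, hρ, hκ⟩ := exists_bounds hT
  set V : Finset (ℤ × ℤ) := (hT.image pr).toFinset with hV
  have memV : ∀ p, p ∈ V ↔ p ∈ pr '' T := fun p => by simp [hV]
  have hBdd : Bdd V ρ := by
    intro p hp
    obtain ⟨x, hx, rfl⟩ := (memV p).1 hp
    exact hρ x hx
  have mapV : ∀ l : List H3Z, (∀ x ∈ l, x ∈ T) → ∀ p ∈ l.map pr, p ∈ V := by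
    intro l hl p hp
    obtain ⟨x, hx, rfl⟩ := List.mem_map.1 hp
    exact (memV _).2 ⟨x, hl x hx, rfl⟩
  set R : ℤ := ρ * V.card with hR
  obtain ⟨M₁, N₀, hplan⟩ := exists_planar V ((memV _).2 ⟨1, h0, rfl⟩)
    (by
      intro x hx
      obtain ⟨g, hg, rfl⟩ := (memV x).1 hx
      exact (memV _).2 ⟨g⁻¹, h1 g hg, rfl⟩) hBdd
    (by
      obtain ⟨x, hx, y, hy, h⟩ := exists_cr_ne h1 h2
      exact ⟨pr x, (memV _).2 ⟨x, hx, rfl⟩, pr y, (memV _).2 ⟨y, hy, rfl⟩, h⟩)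
    ((4 * κ + 2 * ρ ^ 2 + 2 * (R * ρ) : ℤ) : ℝ)
  obtain ⟨M₂, hM₂⟩ := exists_word_finite h0 h1 h2 (finite_ball R (4 * ρ ^ 2))
  refine ⟨M₁ + M₂, N₀ + M₁, fun w hw hw0 hN v hv hvN => ?_⟩
  have hR0 : 0 ≤ R := by positivity
  have hSw := abs_le.1 (abs_sum_en_le hκ w hw)
  have hew := en_prod w
  -- Orient the planar path so that its area is nonnegative up to the letter contribution.
  obtain ⟨w₁, hw₁, hw₁0, hl₁, hA₁⟩ : ∃ w₁ : List (ℤ × ℤ), (∀ x ∈ w₁, x ∈ V) ∧ w₁.sum = 0 ∧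
      w₁.length = w.length ∧ |en w.prod| - κ * w.length ≤ Ar w₁ := by
    rw [pr_prod] at hw0
    rcases le_total 0 (en w.prod) with h | h
    · refine ⟨w.map pr, mapV w hw, hw0, by simp, ?_⟩
      rw [abs_of_nonneg h]; linarith [hSw.2]
    · refine ⟨(w.map pr).reverse, fun x hx => mapV w hw x (List.mem_reverse.1 hx), ?_, by simp, ?_⟩
      · rw [List.sum_reverse, hw0]
      · rw [abs_of_nonpos h, Ar_reverse]; linarith [hSw.1]
  obtain ⟨w', hw', hl', hs1, hs2, hA'⟩ := hplan w₁ hw₁ hw₁0 (by omega) (v.map pr) (mapV v hv)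
    (by simpa [hl₁] using hvN)
  rw [hl₁] at hA' hl'
  replace hA' : Ar w₁ + (4 * κ + 2 * ρ ^ 2 + 2 * (R * ρ)) * w.length ≤ Ar w' := by
    exact_mod_cast hA'
  obtain ⟨l, hl, hlw⟩ := exists_lift w' (fun x hx => (memV x).1 (hw' x hx))
  have hll : l.length = w'.length := by rw [← hlw]; simp
  have hSl := abs_le.1 (abs_sum_en_le hκ l hl)
  have hel := en_prod l
  have helr := en_prod l.reverse
  rw [List.map_reverse, List.map_reverse, Ar_reverse, List.sum_reverse, hlw] at helr
  rw [hlw] at hel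
  set N : ℤ := (w.length : ℤ) with hNdef
  have hlN : (l.length : ℤ) ≤ 2 * N := by
    have : l.length ≤ 2 * w.length := by omega
    rw [hNdef]; exact_mod_cast this
  have hκl : κ * (l.length : ℤ) ≤ κ * (2 * N) := by gcongr
  set u := pr v.prod with hu
  have hum : u = (v.map pr).sum := pr_prod v
  have hpl : pr l.prod = w'.sum := by rw [pr_prod, hlw]
  have hd : (v.length : ℤ) ^ 2 ≤ N := by rw [hNdef]; exact_mod_cast hvN
  have hd1 : (v.length : ℤ) ≤ N := by
    have : v.length ≤ w.length := le_trans (Nat.le_self_pow (by norm_num) _) hvN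
    rw [hNdef]; exact_mod_cast this
  have hu1 := hBdd.sum (v.map pr) (mapV v hv)
  rw [← hum, List.length_map] at hu1
  have hpu : |(pr l.prod - u).1| ≤ R ∧ |(pr l.prod - u).2| ≤ R := by
    rw [hpl, hum]; exact ⟨hs1, hs2⟩
  have hcr : |cr (pr l.prod) u| ≤ 2 * (R * ρ) * N := by
    have h := abs_cr_le hpu hu1
    have e : cr (pr l.prod - u) u = cr (pr l.prod) u := by
      rw [sub_eq_add_neg, cr_add_left, cr_neg_left, cr_self]; ring
    rw [e] at h
    calc _ ≤ _ := h
      _ = 2 * (R * ρ) * v.length := by ring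
      _ ≤ _ := by gcongr
  have hev : |en v.prod| ≤ (2 * ρ ^ 2 + κ) * N := by
    rw [en_prod]
    have a1 := hBdd.Ar (v.map pr) (mapV v hv)
    rw [List.length_map] at a1
    have a2 := abs_sum_en_le hκ v hv
    have a3 : 2 * ρ ^ 2 * (v.length : ℤ) ^ 2 ≤ 2 * ρ ^ 2 * N := by gcongr
    have a4 : κ * (v.length : ℤ) ≤ κ * N := by gcongr
    have := abs_add_le (Ar (v.map pr)) (v.map en).sum
    linarith
  -- `t` is the value of `en` for which the remaining discrepancy is purely horizontal.
  set t : ℤ := en (w.prod * v.prod) - cr (pr l.prod) u with ht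
  have htabs : |t| ≤ |en w.prod| + (2 * ρ ^ 2 + κ + 2 * (R * ρ)) * N := by
    have e : en (w.prod * v.prod) = en w.prod + en v.prod := by
      rw [en_mul, hw0, cr_zero_left, add_zero]
    rw [ht, e]
    have b1 := abs_sub (en w.prod + en v.prod) (cr (pr l.prod) u)
    have b2 := abs_add_le (en w.prod) (en v.prod)
    linarith
  have htI : t ∈ Set.uIcc (en l.reverse.prod) (en l.prod) := by
    rw [Set.mem_uIcc]
    left
    have := abs_le.1 htabs
    constructor <;> linarith [hSl.1, hSl.2, this.1, this.2]
  have hlr : ∀ x ∈ l.reverse, x ∈ T := fun x hx => hl x (List.mem_reverse.1 hx)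
  obtain ⟨l₂, hperm, hl₂⟩ := exists_perm_near (κ := 4 * ρ ^ 2) (by positivity)
    (fun x hx y hy => by
      have := abs_cr_le (hρ x hx) (hρ y hy)
      linarith) l.reverse_perm hlr t htI
  have hperm' : l₂.Perm l := hperm.trans l.reverse_perm
  have hpr₂ : pr l₂.prod = pr l.prod := by
    rw [pr_prod, pr_prod]; exact (hperm'.map pr).sum_eq
  obtain ⟨l₃, hl₃, hlen₃, hp₃⟩ := hM₂ (l₂.prod⁻¹ * (w.prod * v.prod)) (by
    have e1 : pr (l₂.prod⁻¹ * (w.prod * v.prod)) = -(pr l.prod - u) := by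
      rw [pr_mul, pr_inv, pr_mul, hw0, hpr₂, zero_add]; abel
    have e2 : en (l₂.prod⁻¹ * (w.prod * v.prod)) = -(en l₂.prod - t) := by
      rw [en_mul, en_inv, pr_inv, pr_mul, hw0, hpr₂, zero_add, ht, cr_neg_left]; ring
    refine ⟨?_, ?_⟩
    · rw [e1]; simpa only [Prod.fst_neg, Prod.snd_neg, abs_neg] using hpu
    · rw [e2, abs_neg]; exact hl₂)
  obtain ⟨l₄, a, b, c⟩ := pad_word (n := w.length + (M₁ + M₂)) h0 (l₂ ++ l₃)
    (by
      intro x hx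
      rcases List.mem_append.1 hx with h | h
      · exact hlr x (hperm.subset h)
      · exact hl₃ x h)
    (by
      have := hperm'.length_eq
      simp only [List.length_append]
      omega)
  refine ⟨l₄, a, b, ?_⟩
  rw [c, List.prod_append, hp₃, mul_inv_cancel_left]

/-! ### The product decomposition -/

variable {m : ℕ}

/-- The surjection `H₃(ℤ)^m → H_{2m+1}(ℤ)` identifying the centres of the factors. -/
def Phi : (Fin m → H3Z) →* H2m1Z m where
  toFun g := ⟨fun i => ((g i).a, (g i).b), ∑ i, (g i).c⟩
  map_one' := by ext <;> simp
  map_mul' g h := by ext <;> simp [Finset.sum_add_distrib]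

lemma iota_eq (i : Fin m) (g : H3Z) : iota i g = Phi (Pi.mulSingle i g) := by
  ext j
  · by_cases h : j = i
    · subst h; simp [iota, Phi]
    · simp [iota, Phi, h]
  · by_cases h : j = i
    · subst h; simp [iota, Phi]
    · simp [iota, Phi, h]
  · simp only [iota, Phi, MonoidHom.coe_mk, OneHom.coe_mk]
    rw [Finset.sum_eq_single i]
    · simp
    · intro j _ h; simp [h]
    · simp

lemma prod_map_mulSingle (s : Fin m → H3Z) (l : List (Fin m)) (hl : l.Nodup) :
    (l.map fun i => (Pi.mulSingle i (s i) : Fin m → H3Z)).prod =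
      fun j => if j ∈ l then s j else 1 := by
  induction l with
  | nil => ext1 j; simp
  | cons i l ih =>
    rw [List.nodup_cons] at hl
    rw [List.map_cons, List.prod_cons, ih hl.2]
    ext1 j
    by_cases h : j = i
    · subst h; simp [hl.1]
    · simp [h]

lemma prod_iota (s : Fin m → H3Z) : (List.ofFn fun i => iota i (s i)).prod = Phi s := by
  have h := prod_map_mulSingle s (List.finRange m) (List.nodup_finRange m)
  simp only [List.mem_finRange, if_true] at h
  conv_rhs => rw [show s = _ from h.symm]
  rw [map_list_prod, List.map_map, List.ofFn_eq_map]
  congr 1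
  exact List.map_congr_left fun i _ => iota_eq i (s i)

lemma mem_cubeGenSet (S : Fin m → Set H3Z) (x : H2m1Z m) :
    x ∈ cubeGenSet S ↔ ∃ s : Fin m → H3Z, (∀ i, s i ∈ S i ∪ {1}) ∧ x = Phi s := by
  simp only [cubeGenSet, Set.mem_ofPred_eq, prod_iota]

/-- A word in the cubical-like generating set is a family of words of the same length, one in
each factor. -/
lemma split_word (S : Fin m → Set H3Z) (l : List (H2m1Z m)) (hl : ∀ x ∈ l, x ∈ cubeGenSet S) :
    ∃ w : Fin m → List H3Z, (∀ i, (w i).length = l.length ∧ ∀ x ∈ w i, x ∈ S i ∪ {1}) ∧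
      l.prod = Phi fun i => (w i).prod := by
  induction l with
  | nil => exact ⟨fun _ => [], by simp, (map_one Phi).symm⟩
  | cons x l ih =>
    obtain ⟨w, hw, hp⟩ := ih (fun y hy => hl y (by simp [hy]))
    obtain ⟨s, hs, rfl⟩ := (mem_cubeGenSet S x).1 (hl x (by simp))
    refine ⟨fun i => s i :: w i, fun i => ⟨by simp [(hw i).1], fun y hy => ?_⟩, ?_⟩
    · rcases List.mem_cons.1 hy with rfl | hy
      · exact hs i
      · exact (hw i).2 y hy
    · rw [List.prod_cons, hp, ← map_mul]
      rfl

lemma join_word (S : Fin m → Set H3Z) (N : ℕ) (w : Fin m → List H3Z)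
    (hw : ∀ i, (w i).length = N ∧ ∀ x ∈ w i, x ∈ S i ∪ {1}) :
    ∃ l : List (H2m1Z m), l.length = N ∧ (∀ x ∈ l, x ∈ cubeGenSet S) ∧
      l.prod = Phi fun i => (w i).prod := by
  induction N generalizing w with
  | zero =>
    refine ⟨[], rfl, by simp, ?_⟩
    have : (fun i => (w i).prod) = 1 := by
      ext1 i; rw [List.length_eq_zero_iff.1 (hw i).1]; rfl
    rw [this, map_one]; rfl
  | succ N ih =>
    have hc : ∀ i, ∃ x t, w i = x :: t := fun i => List.exists_cons_of_length_eq_add_one (hw i).1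
    choose x t hxt using hc
    obtain ⟨l, h1, h2, h3⟩ := ih t fun i => by
      have := hw i
      rw [hxt i] at this
      exact ⟨by simpa using this.1, fun y hy => this.2 y (by simp [hy])⟩
    refine ⟨Phi x :: l, by simp [h1], fun y hy => ?_, ?_⟩
    · rcases List.mem_cons.1 hy with rfl | hy
      · exact (mem_cubeGenSet S _).2 ⟨x, fun i => (hw i).2 _ (by simp [hxt i]), rfl⟩
      · exact h2 y hy
    · rw [List.prod_cons, h3, ← map_mul]
      congr 1
      ext1 i
      simp [hxt i]

lemma exists_cube_word (hm : 1 ≤ m) (S : Fin m → Set H3Z)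
    (hsymm : ∀ i, ∀ s ∈ S i ∪ {1}, s⁻¹ ∈ S i ∪ {1})
    (hgen : ∀ i, Subgroup.closure (S i ∪ {1}) = ⊤) (g : H2m1Z m) :
    ∃ l : List (H2m1Z m), (∀ x ∈ l, x ∈ cubeGenSet S) ∧ l.prod = g := by
  set f : Fin m → H3Z := fun i => ⟨(g.u i).1, (g.u i).2, if i = ⟨0, hm⟩ then g.c else 0⟩ with hf
  have hfg : Phi f = g := by
    ext <;> simp [Phi, hf]
  choose w hw hp using fun i => exists_word (hsymm i) (hgen i) (f i)
  choose w' hw' hl' hp' using fun i => pad_word (T := S i ∪ {1})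
    (n := ∑ j, (w j).length) (Or.inr rfl) (w i) (hw i)
    (Finset.single_le_sum (f := fun j => (w j).length) (fun _ _ => Nat.zero_le _)
      (Finset.mem_univ i))
  obtain ⟨l, -, h2, h3⟩ := join_word S _ w' fun i => ⟨hl' i, hw' i⟩
  refine ⟨l, h2, ?_⟩
  rw [h3, ← hfg]
  congr 1
  ext1 i
  rw [hp', hp]

lemma exists_minimal_word {G : Type*} [Group G] {T : Set G} {g : G}
    (h : ∃ l : List G, (∀ x ∈ l, x ∈ T) ∧ l.prod = g) :
    ∃ l : List G, l.length = wordLength T g ∧ (∀ x ∈ l, x ∈ T) ∧ l.prod = g := by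
  obtain ⟨l, h1, h2⟩ := h
  exact Nat.sInf_mem (s := {n | ∃ l : List G, l.length = n ∧ (∀ x ∈ l, x ∈ T) ∧ l.prod = g})
    ⟨_, l, rfl, h1, h2⟩

lemma wordLength_le {G : Type*} [Group G] {T : Set G} (l : List G) (h : ∀ x ∈ l, x ∈ T) :
    wordLength T l.prod ≤ l.length :=
  Nat.sInf_le ⟨l, rfl, h, rfl⟩

/-- The isoperimetric inequality for closed words. -/
lemma exists_c_le {T : Set H3Z} (hT : T.Finite) : ∃ K : ℕ, ∀ w : List H3Z, (∀ x ∈ w, x ∈ T) →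
    pr w.prod = 0 → w.prod.c ≤ K * (w.length : ℤ) ^ 2 := by
  classical
  obtain ⟨ρ, κ, hρ0, hκ0, hρ, hκ⟩ := exists_bounds hT
  refine ⟨(2 * ρ ^ 2 + κ).toNat, fun w hw h0 => ?_⟩
  rw [Int.toNat_of_nonneg (by positivity)]
  have hBdd : Bdd (hT.image pr).toFinset ρ := by
    intro p hp
    obtain ⟨x, hx, rfl⟩ := (Set.Finite.mem_toFinset _).1 hp
    exact hρ x hx
  have h1 := hBdd.Ar (w.map pr) (fun p hp => by
    obtain ⟨x, hx, rfl⟩ := List.mem_map.1 hp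
    exact (Set.Finite.mem_toFinset _).2 ⟨x, hw x hx, rfl⟩)
  have h2 := abs_sum_en_le hκ w hw
  have h3 := en_prod w
  rw [List.length_map] at h1
  have ha : w.prod.a = 0 := congrArg Prod.fst h0
  simp only [en, ha, zero_mul, sub_zero] at h3
  have h4 : (w.length : ℤ) ≤ (w.length : ℤ) ^ 2 := by exact_mod_cast Nat.le_self_pow (by norm_num) _
  have h5 : κ * (w.length : ℤ) ≤ κ * (w.length : ℤ) ^ 2 := by gcongr
  have h6 : 0 ≤ (2 * ρ ^ 2 + κ) * (w.length : ℤ) ^ 2 := by positivity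
  linarith [(abs_le.1 h1).2, (abs_le.1 h2).2]

end DeadEnds

/-- Almost dead ends in `H_{2m+1}(ℤ)` for cubical-like word metrics. -/
theorem almost_dead_ends_in_H2m1Z (m : ℕ) (hm : 1 ≤ m)
    (S : Fin m → Set H3Z) (hfin : ∀ i, (S i).Finite)
    (hsymm : ∀ i, ∀ s ∈ S i, s⁻¹ ∈ S i)
    (hgen : ∀ i, Subgroup.closure (S i) = ⊤) :
    ∃ C M : ℝ, 0 < C ∧ 0 < M ∧ ∃ D₀ : ℝ,
      ∀ D : ℝ, D₀ ≤ D → ∀ n : ℤ, C * D^4 ≤ (n : ℝ) →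
        ∀ h : H2m1Z m, (wordLength (cubeGenSet S) h : ℝ) ≤ D →
          (wordLength (cubeGenSet S) ((⟨fun _ => 0, n⟩ : H2m1Z m) * h) : ℝ) ≤
            (wordLength (cubeGenSet S) (⟨fun _ => 0, n⟩ : H2m1Z m) : ℝ) + M := by
  have hfin' : ∀ i, (S i ∪ {1}).Finite := fun i => (hfin i).union (Set.finite_singleton 1)
  have hone : ∀ i, (1 : H3Z) ∈ S i ∪ {1} := fun i => Or.inr rfl
  have hsymm' : ∀ i, ∀ s ∈ S i ∪ {1}, s⁻¹ ∈ S i ∪ {1} := by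
    rintro i s (hs | rfl)
    · exact Or.inl (hsymm i s hs)
    · exact Or.inr inv_one
  have hgen' : ∀ i, Subgroup.closure (S i ∪ {1}) = ⊤ := fun i =>
    top_le_iff.1 ((hgen i).symm.le.trans (Subgroup.closure_mono Set.subset_union_left))
  choose M N₀ hMN using fun i =>
    DeadEnds.heisenberg_word (hfin' i) (hone i) (hsymm' i) (hgen' i)
  choose K hK using fun i => DeadEnds.exists_c_le (hfin' i)
  have le_tot : ∀ (f : Fin m → ℕ) i, f i ≤ ∑ j, f j := fun f i =>
    Finset.single_le_sum (fun _ _ => Nat.zero_le _) (Finset.mem_univ i)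
  set Mt := ∑ i, M i
  set Nt := ∑ i, N₀ i
  set Kt := ∑ i, K i with hKt
  refine ⟨((Kt : ℝ) + 1) * ((Nt : ℝ) + 1) ^ 2, Mt + 1, by positivity, by positivity, 1, ?_⟩
  intro D hD n hn h hh
  obtain ⟨lz, hlz, hlzS, hlzp⟩ := DeadEnds.exists_minimal_word
    (DeadEnds.exists_cube_word hm S hsymm' hgen' (⟨fun _ => 0, n⟩ : H2m1Z m))
  obtain ⟨lh, hlh, hlhS, hlhp⟩ := DeadEnds.exists_minimal_word
    (DeadEnds.exists_cube_word hm S hsymm' hgen' h)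
  rw [← hlz]
  rw [← hlh] at hh
  obtain ⟨w, hw, hwp⟩ := DeadEnds.split_word S lz hlzS
  obtain ⟨v, hv, hvp⟩ := DeadEnds.split_word S lh hlhS
  have hz := hwp.symm.trans hlzp
  have hw0 : ∀ i, DeadEnds.pr (w i).prod = 0 := fun i => congrFun (congrArg H2m1Z.u hz) i
  have hc : ∑ i, (w i).prod.c = n := congrArg H2m1Z.c hz
  -- A word for `zⁿ` has length at least of order `√n`, hence of order `D²`.
  have hnle : (n : ℝ) ≤ (Kt : ℝ) * (lz.length : ℝ) ^ 2 := by
    have : n ≤ (Kt : ℤ) * (lz.length : ℤ) ^ 2 := by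
      rw [← hc, hKt]
      push_cast
      rw [Finset.sum_mul]
      refine Finset.sum_le_sum fun i _ => ?_
      have := hK i (w i) (hw i).2 (hw0 i)
      rwa [(hw i).1] at this
    exact_mod_cast this
  have hlen : ((Nt : ℝ) + 1) * D ^ 2 ≤ lz.length := by
    by_contra! hlt
    have h1 : (lz.length : ℝ) ^ 2 < (((Nt : ℝ) + 1) * D ^ 2) ^ 2 := by gcongr
    have h2 : (Kt : ℝ) * (lz.length : ℝ) ^ 2 ≤ ((Kt : ℝ) + 1) * (lz.length : ℝ) ^ 2 := by
      gcongr; linarith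
    have h3 : ((Kt : ℝ) + 1) * (lz.length : ℝ) ^ 2 <
        ((Kt : ℝ) + 1) * (((Nt : ℝ) + 1) * D ^ 2) ^ 2 := by gcongr
    have h4 : ((Kt : ℝ) + 1) * (((Nt : ℝ) + 1) * D ^ 2) ^ 2 =
      ((Kt : ℝ) + 1) * ((Nt : ℝ) + 1) ^ 2 * D ^ 4 := by ring
    linarith
  have hD2 : 1 ≤ D ^ 2 := one_le_pow₀ hD
  have hNt : Nt ≤ lz.length := by
    have : (Nt : ℝ) ≤ lz.length := by nlinarith [(Nat.cast_nonneg Nt : (0 : ℝ) ≤ Nt)]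
    exact_mod_cast this
  have hd : lh.length ^ 2 ≤ lz.length := by
    have h1 : (lh.length : ℝ) ^ 2 ≤ D ^ 2 := by gcongr
    have : (lh.length : ℝ) ^ 2 ≤ lz.length := by
      nlinarith [(Nat.cast_nonneg Nt : (0 : ℝ) ≤ Nt)]
    exact_mod_cast this
  choose l hl hll hlp using fun i => hMN i (w i) (hw i).2 (hw0 i)
    (by rw [(hw i).1]; exact (le_tot N₀ i).trans hNt) (v i) (hv i).2
    (by rw [(hv i).1, (hw i).1]; exact hd)
  choose l' hl' hll' hlp' using fun i => DeadEnds.pad_word (n := lz.length + Mt) (hone i) (l i)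
    (hl i) (by rw [hll, (hw i).1]; exact Nat.add_le_add_left (le_tot M i) _)
  obtain ⟨L, hL, hLS, hLp⟩ := DeadEnds.join_word S (lz.length + Mt) l' fun i => ⟨hll' i, hl' i⟩
  have hprod : L.prod = (⟨fun _ => 0, n⟩ : H2m1Z m) * h := by
    rw [hLp, ← hlzp, ← hlhp, hwp, hvp, ← map_mul]
    congr 1
    ext1 i
    rw [hlp', hlp]; rfl
  rw [← hprod]
  have : (wordLength (cubeGenSet S) L.prod : ℝ) ≤ ((lz.length + Mt : ℕ) : ℝ) := by
    exact_mod_cast hL ▸ DeadEnds.wordLength_le L hLS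
  push_cast at this
  linarith
end

section
/- Let G₁,…,G_m be groups with finite symmetric generating sets S₁,…,S_m, and equip G = G₁ × ⋯ × G_m with the cubical-like generating set S_cube = {(s₁,…,s_m) : sᵢ ∈ Sᵢ ∪ {e}}. If some (G_j, S_j) with G_j infinite has deep pockets, then (G, S_cube) has deep pockets. -/
/-- `g` is a dead end of depth `≥ D` for `(G, S)` if `‖g·h‖_S ≤ ‖g‖_S` for every `h`
with `‖h‖_S ≤ D`. -/
def IsDeadEnd {G : Type*} [Monoid G] (S : Set G) (D : ℕ) (g : G) : Prop :=
  ∀ h : G, wordLength S h ≤ D → wordLength S (g * h) ≤ wordLength S g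

/-- `(G, S)` has deep pockets if it has dead ends of arbitrarily large depth. -/
def HasDeepPockets {G : Type*} [Monoid G] (S : Set G) : Prop :=
  ∀ D : ℕ, ∃ g : G, IsDeadEnd S D g

/-- The cubical-like generating set of a direct product:
`S_cube = {(s₁,…,s_m) : sᵢ ∈ Sᵢ ∪ {1}}`. -/
def cubeGen {m : ℕ} {G : Fin m → Type*} [∀ i, Group (G i)]
    (S : ∀ i, Set (G i)) : Set (∀ i, G i) :=
  { g | ∀ i, g i ∈ S i ∪ {1} }

/-- The standard-like generating set of a direct product: all elements with one
coordinate in some `Sⱼ` and all other coordinates equal to the identity. -/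
def stndGen {m : ℕ} {G : Fin m → Type*} [∀ i, Group (G i)]
    (S : ∀ i, Set (G i)) : Set (∀ i, G i) :=
  { g | ∃ j, g j ∈ S j ∧ ∀ i, i ≠ j → g i = 1 }

section WordLength

variable {H : Type*} [Group H] {S : Set H}

theorem wordLength_prod_le (l : List H) (hl : ∀ x ∈ l, x ∈ S) :
    wordLength S l.prod ≤ l.length :=
  Nat.sInf_le ⟨l, rfl, hl, rfl⟩

/-- For a symmetric generating set the infimum defining the word length is attained: the set of
lengths is nonempty, so the convention `sInf ∅ = 0` plays no role. -/
theorem exists_word (hs : ∀ s ∈ S, s⁻¹ ∈ S) (hg : Subgroup.closure S = ⊤) (g : H) :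
    ∃ l : List H, l.length = wordLength S g ∧ (∀ x ∈ l, x ∈ S) ∧ l.prod = g := by
  have hne : { n | ∃ l : List H, l.length = n ∧ (∀ x ∈ l, x ∈ S) ∧ l.prod = g }.Nonempty := by
    obtain ⟨l, hl, hp⟩ := Submonoid.exists_list_of_mem_closure
      (show g ∈ Submonoid.closure (S ∪ S⁻¹) by
        rw [← Subgroup.closure_toSubmonoid, hg]; trivial)
    refine ⟨l.length, l, rfl, fun x hx => ?_, hp⟩
    rcases hl x hx with h | h
    · exact h
    · simpa using hs _ h
  exact Nat.sInf_mem hne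

theorem wordLength_one : wordLength S (1 : H) = 0 :=
  Nat.le_zero.mp (wordLength_prod_le (S := S) [] (by simp))

theorem wordLength_mul_le (hs : ∀ s ∈ S, s⁻¹ ∈ S) (hg : Subgroup.closure S = ⊤) (a b : H) :
    wordLength S (a * b) ≤ wordLength S a + wordLength S b := by
  obtain ⟨l, hl, hlS, rfl⟩ := exists_word hs hg a
  obtain ⟨k, hk, hkS, rfl⟩ := exists_word hs hg b
  rw [← hl, ← hk, ← List.prod_append, ← List.length_append]
  exact wordLength_prod_le _ fun x hx => (List.mem_append.mp hx).elim (hlS x) (hkS x)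

theorem wordLength_inv_le (hs : ∀ s ∈ S, s⁻¹ ∈ S) (hg : Subgroup.closure S = ⊤) (a : H) :
    wordLength S a⁻¹ ≤ wordLength S a := by
  obtain ⟨l, hl, hlS, rfl⟩ := exists_word hs hg a
  rw [← hl, List.prod_inv_reverse]
  refine (wordLength_prod_le _ fun x hx => ?_).trans (by simp)
  simp only [List.mem_reverse, List.mem_map] at hx
  obtain ⟨y, hy, rfl⟩ := hx
  exact hs y (hlS y hy)

theorem wordLength_prod_le_of_union_one (hs : ∀ s ∈ S, s⁻¹ ∈ S) (hg : Subgroup.closure S = ⊤)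
    (l : List H) (hl : ∀ x ∈ l, x ∈ S ∪ {1}) : wordLength S l.prod ≤ l.length := by
  induction l with
  | nil => simp [wordLength_one]
  | cons a l ih =>
    have ih := ih fun x hx => hl x (List.mem_cons_of_mem _ hx)
    rcases hl a List.mem_cons_self with ha | ha
    · have h1 : wordLength S a ≤ 1 := by
        simpa using wordLength_prod_le (S := S) [a] (by simpa using ha)
      have := wordLength_mul_le hs hg a l.prod
      rw [List.prod_cons, List.length_cons]
      omega
    · rw [Set.mem_singleton_iff] at ha
      subst ha
      rw [List.prod_cons, one_mul, List.length_cons]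
      omega

theorem finite_words (hf : S.Finite) (n : ℕ) :
    { g : H | ∃ l : List H, l.length = n ∧ (∀ x ∈ l, x ∈ S) ∧ l.prod = g }.Finite := by
  induction n with
  | zero =>
    refine (Set.finite_singleton 1).subset ?_
    rintro g ⟨l, hl, -, rfl⟩
    simp [List.length_eq_zero_iff.mp hl]
  | succ n ih =>
    refine (hf.image2 (· * ·) ih).subset ?_
    rintro g ⟨l, hl, hS, rfl⟩
    cases l with
    | nil => simp at hl
    | cons a l =>
      exact ⟨a, hS a List.mem_cons_self, l.prod,
        ⟨l, by simpa using hl, fun x hx => hS x (List.mem_cons_of_mem _ hx), rfl⟩, by simp⟩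

/-- A prefix of length `D` of a geodesic word is again geodesic; balls being finite, an infinite
group has geodesic words of length at least `D`. -/
theorem exists_wordLength_eq [Infinite H] (hf : S.Finite) (hs : ∀ s ∈ S, s⁻¹ ∈ S)
    (hg : Subgroup.closure S = ⊤) (D : ℕ) : ∃ k : H, wordLength S k = D := by
  obtain ⟨g, hgD⟩ : ∃ g : H, D ≤ wordLength S g := by
    by_contra! h
    refine Set.infinite_univ (α := H)
      (((Set.finite_Iio D).biUnion fun n _ => finite_words hf n).subset fun g _ => ?_)
    exact Set.mem_biUnion (h g) (exists_word hs hg g)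
  obtain ⟨l, hl, hlS, hp⟩ := exists_word hs hg g
  have h1 := wordLength_prod_le (l.take D) fun x hx => hlS x (List.mem_of_mem_take hx)
  have h2 := wordLength_prod_le (l.drop D) fun x hx => hlS x (List.mem_of_mem_drop hx)
  have h3 := wordLength_mul_le hs hg (l.take D).prod (l.drop D).prod
  rw [List.prod_take_mul_prod_drop, hp] at h3
  rw [List.length_take] at h1
  rw [List.length_drop] at h2
  exact ⟨(l.take D).prod, by omega⟩

/-- In an infinite group, dead ends of large depth are far from the identity. -/
theorem le_wordLength_of_isDeadEnd [Infinite H] (hf : S.Finite) (hs : ∀ s ∈ S, s⁻¹ ∈ S)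
    (hg : Subgroup.closure S = ⊤) {D : ℕ} {g : H} (h : IsDeadEnd S (2 * D) g) :
    D ≤ wordLength S g := by
  by_contra! hlt
  obtain ⟨k, hk⟩ := exists_wordLength_eq hf hs hg D
  have h1 := wordLength_mul_le hs hg g⁻¹ k
  have h2 := wordLength_inv_le hs hg g
  have h3 := h (g⁻¹ * k) (by omega)
  rw [mul_inv_cancel_left] at h3
  omega

end WordLength

section Cube

variable {m : ℕ} {G : Fin m → Type*} [∀ i, Group (G i)] {S : ∀ i, Set (G i)}

theorem exists_word_cube (hs : ∀ i, ∀ s ∈ S i, s⁻¹ ∈ S i)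
    (hg : ∀ i, Subgroup.closure (S i) = ⊤) (g : ∀ i, G i) (n : ℕ)
    (h : ∀ i, wordLength (S i) (g i) ≤ n) :
    ∃ L : List (∀ i, G i), L.length = n ∧ (∀ x ∈ L, x ∈ cubeGen S) ∧ L.prod = g := by
  -- Pad geodesic words of all the coordinates to the common length `n`.
  have hpad : ∀ i, ∃ l : List (G i),
      l.length = n ∧ (∀ x ∈ l, x ∈ S i ∪ {1}) ∧ l.prod = g i := by
    intro i
    obtain ⟨l, hl, hlS, hp⟩ := exists_word (hs i) (hg i) (g i)
    refine ⟨l ++ List.replicate (n - l.length) 1, ?_, fun x hx => ?_, by simp [hp]⟩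
    · have := h i
      rw [List.length_append, List.length_replicate]
      omega
    · rcases List.mem_append.mp hx with hx | hx
      · exact Or.inl (hlS x hx)
      · exact Or.inr (List.eq_of_mem_replicate hx)
  choose l hl hlS hp using hpad
  refine ⟨List.ofFn fun (k : Fin n) i => (l i)[(k : ℕ)]'(by rw [hl]; exact k.2),
    by simp, fun x hx i => ?_, ?_⟩
  · obtain ⟨k, rfl⟩ := (List.mem_ofFn' _ _).mp hx
    exact hlS i _ (List.getElem_mem _)
  · funext i
    rw [← hp i, Pi.list_prod_apply]
    congr 1
    apply List.ext_getElem <;> simp [hl]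

theorem wordLength_cube_le (hs : ∀ i, ∀ s ∈ S i, s⁻¹ ∈ S i)
    (hg : ∀ i, Subgroup.closure (S i) = ⊤) (g : ∀ i, G i) (n : ℕ)
    (h : ∀ i, wordLength (S i) (g i) ≤ n) : wordLength (cubeGen S) g ≤ n := by
  obtain ⟨L, rfl, hL, rfl⟩ := exists_word_cube hs hg g n h
  exact wordLength_prod_le L hL

theorem wordLength_apply_le (hs : ∀ i, ∀ s ∈ S i, s⁻¹ ∈ S i)
    (hg : ∀ i, Subgroup.closure (S i) = ⊤) (g : ∀ i, G i) (i : Fin m) :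
    wordLength (S i) (g i) ≤ wordLength (cubeGen S) g := by
  obtain ⟨L, hL, hLS, hp⟩ : ∃ L : List (∀ i, G i),
      L.length = wordLength (cubeGen S) g ∧ (∀ x ∈ L, x ∈ cubeGen S) ∧ L.prod = g :=
    Nat.sInf_mem (s := { n | ∃ L : List (∀ i, G i),
        L.length = n ∧ (∀ x ∈ L, x ∈ cubeGen S) ∧ L.prod = g })
      ⟨_, exists_word_cube hs hg g (∑ i, wordLength (S i) (g i))
        fun i => Finset.single_le_sum (f := fun i => wordLength (S i) (g i))
          (fun _ _ => Nat.zero_le _) (Finset.mem_univ i)⟩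
  rw [← hL, ← hp, Pi.list_prod_apply]
  refine (wordLength_prod_le_of_union_one (hs i) (hg i) _ fun x hx => ?_).trans (by simp)
  obtain ⟨y, hy, rfl⟩ := List.mem_map.mp hx
  exact hLS y hy i

end Cube

/-- If some infinite factor `(Gⱼ, Sⱼ)` has deep pockets, then the direct product with the
cubical-like generating set has deep pockets. -/
theorem deep_pockets_of_cube (m : ℕ) (hm : 1 ≤ m)
    (G : Fin m → Type*) [∀ i, Group (G i)] (S : ∀ i, Set (G i))
    (hfin : ∀ i, (S i).Finite) (hsymm : ∀ i, ∀ s ∈ S i, s⁻¹ ∈ S i)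
    (hgen : ∀ i, Subgroup.closure (S i) = ⊤)
    (j : Fin m) (hinf : Infinite (G j)) (hdp : HasDeepPockets (S j)) :
    HasDeepPockets (cubeGen S) := by
  intro D
  obtain ⟨g, hg⟩ := hdp (2 * D)
  have hD := le_wordLength_of_isDeadEnd (hfin j) (hsymm j) (hgen j) hg
  refine ⟨Pi.mulSingle j g, fun h hh => wordLength_cube_le hsymm hgen _ _ fun i => ?_⟩
  have hgl := wordLength_apply_le hsymm hgen (Pi.mulSingle j g) j
  rw [Pi.mulSingle_eq_same] at hgl
  have hi := wordLength_apply_le hsymm hgen h i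
  by_cases hij : i = j
  · subst hij
    rw [Pi.mul_apply, Pi.mulSingle_eq_same]
    exact (hg (h i) (by omega)).trans hgl
  · rw [Pi.mul_apply, Pi.mulSingle_eq_of_ne hij, one_mul]
    omega
end

section
/- Let G₁,…,G_m be groups with finite symmetric generating sets S₁,…,S_m, and equip G = G₁ × ⋯ × G_m with the standard-like generating set S_stnd consisting of all elements with one coordinate in some Sⱼ and all other coordinates equal to the identity. If some (G_j, S_j) does not have deep pockets (i.e., there exists D such that G_j has no dead end of depth ≥ D with respect to S_j), then (G, S_stnd) does not have deep pockets. -/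
theorem wordLength_le {G : Type*} [Monoid G] {S : Set G} (l : List G) (hl : ∀ x ∈ l, x ∈ S) :
    wordLength S l.prod ≤ l.length :=
  Nat.sInf_le ⟨l, rfl, hl, rfl⟩

/-- Since `S` is symmetric and generates, every element is a product of elements of `S`, so the
infimum defining `wordLength` is attained. -/
theorem exists_geodesic {G : Type*} [Group G] {S : Set G} (hsymm : ∀ s ∈ S, s⁻¹ ∈ S)
    (hgen : Subgroup.closure S = ⊤) (g : G) :
    ∃ l : List G, l.length = wordLength S g ∧ (∀ x ∈ l, x ∈ S) ∧ l.prod = g := by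
  have hne : { n | ∃ l : List G, l.length = n ∧ (∀ x ∈ l, x ∈ S) ∧ l.prod = g }.Nonempty := by
    obtain ⟨l, hl, hp⟩ := Submonoid.exists_list_of_mem_closure (s := S ∪ S⁻¹) (x := g) (by
      rw [← Subgroup.closure_toSubmonoid, hgen]
      trivial)
    refine ⟨l.length, l, rfl, fun x hx => ?_, hp⟩
    rcases hl x hx with h | h
    · exact h
    · simpa using hsymm _ h
  exact Nat.sInf_mem hne

theorem wordLength_one_s14 {G : Type*} [Monoid G] (S : Set G) : wordLength S 1 = 0 :=
  Nat.le_zero.mp (wordLength_le (S := S) [] (by simp))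

theorem wordLength_mul_le_of_mem {G : Type*} [Group G] {S : Set G} (hsymm : ∀ s ∈ S, s⁻¹ ∈ S)
    (hgen : Subgroup.closure S = ⊤) {s : G} (hs : s ∈ S) (g : G) :
    wordLength S (s * g) ≤ 1 + wordLength S g := by
  obtain ⟨l, hlen, hl, hp⟩ := exists_geodesic hsymm hgen g
  have := wordLength_le (S := S) (s :: l) (by simpa using ⟨hs, hl⟩)
  rw [List.prod_cons, hp, List.length_cons, hlen] at this
  omega

section Product

variable {m : ℕ} {G : Fin m → Type*} [∀ i, Group (G i)] (S : ∀ i, Set (G i))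

/-- Each letter of a word over `stndGen S` increases the total length of the coordinates by at
most one. -/
theorem sum_wordLength_le (hsymm : ∀ i, ∀ s ∈ S i, s⁻¹ ∈ S i)
    (hgen : ∀ i, Subgroup.closure (S i) = ⊤) (l : List (∀ i, G i)) (hl : ∀ x ∈ l, x ∈ stndGen S) :
    ∑ i, wordLength (S i) (l.prod i) ≤ l.length := by
  induction l with
  | nil => simp [wordLength_one_s14]
  | cons x l ih =>
    obtain ⟨k, hk, hne⟩ := hl x (by simp)
    have ih' := ih fun y hy => hl y (by simp [hy])
    rw [← Finset.add_sum_erase _ _ (Finset.mem_univ k)] at ih' ⊢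
    have hrest : ∑ i ∈ Finset.univ.erase k, wordLength (S i) ((x :: l).prod i)
        = ∑ i ∈ Finset.univ.erase k, wordLength (S i) (l.prod i) := by
      refine Finset.sum_congr rfl fun i hi => ?_
      rw [List.prod_cons, Pi.mul_apply, hne i (Finset.ne_of_mem_erase hi), one_mul]
    have h1 := wordLength_mul_le_of_mem (hsymm k) (hgen k) hk (l.prod k)
    rw [hrest, List.prod_cons, Pi.mul_apply, List.length_cons]
    omega

/-- Concatenating geodesics of the coordinates, one coordinate at a time, spells `g`. -/
theorem exists_list_stndGen (hsymm : ∀ i, ∀ s ∈ S i, s⁻¹ ∈ S i)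
    (hgen : ∀ i, Subgroup.closure (S i) = ⊤) (t : Finset (Fin m)) :
    ∀ g : ∀ i, G i, (∀ i ∉ t, g i = 1) → ∃ l : List (∀ i, G i),
      l.length = ∑ i ∈ t, wordLength (S i) (g i) ∧ (∀ x ∈ l, x ∈ stndGen S) ∧ l.prod = g := by
  induction t using Finset.induction_on with
  | empty => exact fun g hg => ⟨[], by simp, by simp, funext fun i => by simp [hg i]⟩
  | insert a t ha ih =>
    intro g hg
    obtain ⟨l, hlen, hl, hp⟩ := ih (Function.update g a 1) (fun i hi => by
      by_cases h : i = a
      · subst h; simp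
      · rw [Function.update_of_ne h]; exact hg i (by simp [h, hi]))
    obtain ⟨w, hwlen, hw, hwp⟩ := exists_geodesic (hsymm a) (hgen a) (g a)
    refine ⟨w.map (MonoidHom.mulSingle G a) ++ l, ?_, ?_, ?_⟩
    · rw [List.length_append, List.length_map, hwlen, hlen, Finset.sum_insert ha]
      congr 1
      refine Finset.sum_congr rfl fun i hi => ?_
      rw [Function.update_of_ne (ne_of_mem_of_not_mem hi ha)]
    · intro x hx
      rcases List.mem_append.mp hx with hx | hx
      · obtain ⟨s, hs, rfl⟩ := List.mem_map.mp hx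
        exact ⟨a, by simpa using hw s hs, fun i hi => by simp [hi]⟩
      · exact hl x hx
    · rw [List.prod_append, ← map_list_prod, hwp, hp]
      funext i
      by_cases h : i = a
      · subst h; simp
      · simp [h]

theorem wordLength_stndGen (hsymm : ∀ i, ∀ s ∈ S i, s⁻¹ ∈ S i)
    (hgen : ∀ i, Subgroup.closure (S i) = ⊤) (g : ∀ i, G i) :
    wordLength (stndGen S) g = ∑ i, wordLength (S i) (g i) := by
  obtain ⟨l, hlen, hl, hp⟩ := exists_list_stndGen S hsymm hgen Finset.univ g (by simp)
  apply le_antisymm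
  · rw [← hlen, ← hp]
    exact wordLength_le l hl
  · refine le_csInf ⟨_, l, rfl, hl, hp⟩ ?_
    rintro n ⟨l', rfl, hl', rfl⟩
    exact sum_wordLength_le S hsymm hgen l' hl'

theorem wordLength_mulSingle (hsymm : ∀ i, ∀ s ∈ S i, s⁻¹ ∈ S i)
    (hgen : ∀ i, Subgroup.closure (S i) = ⊤) (j : Fin m) (h : G j) :
    wordLength (stndGen S) (Pi.mulSingle j h) = wordLength (S j) h := by
  rw [wordLength_stndGen S hsymm hgen, Finset.sum_eq_single j]
  · rw [Pi.mulSingle_eq_same]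
  · intro i _ hi
    rw [Pi.mulSingle_eq_of_ne hi, wordLength_one_s14]
  · simp

end Product

/-- If some factor `(Gⱼ, Sⱼ)` does not have deep pockets, then the direct product with
the standard-like generating set does not have deep pockets. -/
theorem no_deep_pockets_of_stnd (m : ℕ) (hm : 1 ≤ m)
    (G : Fin m → Type*) [∀ i, Group (G i)] (S : ∀ i, Set (G i))
    (hfin : ∀ i, (S i).Finite) (hsymm : ∀ i, ∀ s ∈ S i, s⁻¹ ∈ S i)
    (hgen : ∀ i, Subgroup.closure (S i) = ⊤)
    (j : Fin m) (hndp : ∃ D : ℕ, ∀ g : G j, ¬ IsDeadEnd (S j) D g) :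
    ¬ HasDeepPockets (stndGen S) := by
  obtain ⟨D, hD⟩ := hndp
  intro hdeep
  obtain ⟨g, hg⟩ := hdeep D
  refine hD (g j) fun h hh => ?_
  have key := hg (Pi.mulSingle j h) (by rwa [wordLength_mulSingle S hsymm hgen])
  rw [wordLength_stndGen S hsymm hgen, wordLength_stndGen S hsymm hgen,
    ← Finset.add_sum_erase _ _ (Finset.mem_univ j),
    ← Finset.add_sum_erase _ _ (Finset.mem_univ j)] at key
  have hrest : ∑ i ∈ Finset.univ.erase j, wordLength (S i) ((g * Pi.mulSingle j h) i)
      = ∑ i ∈ Finset.univ.erase j, wordLength (S i) (g i) := by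
    refine Finset.sum_congr rfl fun i hi => ?_
    rw [Pi.mul_apply, Pi.mulSingle_eq_of_ne (Finset.ne_of_mem_erase hi), mul_one]
  rw [hrest, Pi.mul_apply, Pi.mulSingle_eq_same] at key
  omega
end
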